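/- arXiv:1508.05249 — 14 statements merged into one kernel-verified Lean document; each statement's English description precedes it below -/
import Mathlib

section
/- Let E be a normed space, X ⊆ E a convex set, and Γ : X → ℝ a quasi-monotone function that has a continuous extension Γ̂ : cl(X) → ℝ to the norm closure of X. Then Γ̂ is quasi-monotone and the interior of Γ̂(cl(X)) in ℝ equals the interior of Γ(X) in ℝ. -/
/-!
Quasi-monotonicity is a family of non-strict inequalities, so it passes to limits: approximate
two points of `closure X` by sequences in `X` and use the continuity of `Γhat`.

For the ranges, `Γ '' X` is an interval, being the continuous image of a convex (hence connected)
set, and `Γhat '' closure X` lies between it and its closure. An interior point `t` of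
`Γhat '' closure X` has points of `closure (Γ '' X)`, hence of `Γ '' X`, strictly on both sides,
so it lies in the interval `Γ '' X`.
-/


/-- `Γ` is quasi-monotone on the convex set `X`. -/
def QuasiMonotoneOn3 {E : Type*} [AddCommGroup E] [Module ℝ E]
    (X : Set E) (f : E → ℝ) : Prop :=
  ∀ x ∈ X, ∀ y ∈ X, ∀ a ∈ Set.Icc (0 : ℝ) 1,
    min (f x) (f y) ≤ f ((1 - a) • x + a • y) ∧
      f ((1 - a) • x + a • y) ≤ max (f x) (f y)

/-- If a quasi-monotone `Γ` on a convex set `X` of a normed space has a continuous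
extension `Γ̂` to the closure of `X`, then `Γ̂` is quasi-monotone and the interior
of `Γ̂(cl X)` equals the interior of `Γ(X)`. -/
theorem stmt_3 {E : Type*} [NormedAddCommGroup E] [NormedSpace ℝ E]
    (X : Set E) (hX : Convex ℝ X) (Γ Γhat : E → ℝ)
    (hqm : QuasiMonotoneOn3 X Γ)
    (hcont : ContinuousOn Γhat (closure X))
    (hext : ∀ x ∈ X, Γhat x = Γ x) :
    QuasiMonotoneOn3 (closure X) Γhat ∧
      interior (Γhat '' closure X) = interior (Γ '' X) := by
  have hcl : Convex ℝ (closure X) := hX.closure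
  refine ⟨?_, ?_⟩
  · intro x hx y hy a ha
    obtain ⟨u, hu, hux⟩ := mem_closure_iff_seq_limit.1 hx
    obtain ⟨v, hv, hvy⟩ := mem_closure_iff_seq_limit.1 hy
    have key : ∀ (w : ℕ → E) (z : E), (∀ n, w n ∈ X) → z ∈ closure X →
        Filter.Tendsto w Filter.atTop (nhds z) →
        Filter.Tendsto (fun n => Γ (w n)) Filter.atTop (nhds (Γhat z)) := by
      intro w z hw hz hwz
      have h : Filter.Tendsto (fun n => Γhat (w n)) Filter.atTop (nhds (Γhat z)) :=
        (hcont z hz).tendsto.comp (tendsto_nhdsWithin_iff.2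
          ⟨hwz, Filter.Eventually.of_forall fun n => subset_closure (hw n)⟩)
      exact h.congr fun n => hext _ (hw n)
    have hsum : (1 - a) + a = 1 := by ring
    have hu' := key u x hu hx hux
    have hv' := key v y hv hy hvy
    have hw' := key (fun n => (1 - a) • u n + a • v n) ((1 - a) • x + a • y)
      (fun n => hX (hu n) (hv n) (sub_nonneg.2 ha.2) ha.1 hsum)
      (hcl hx hy (sub_nonneg.2 ha.2) ha.1 hsum)
      ((hux.const_smul _).add (hvy.const_smul _))
    exact ⟨le_of_tendsto_of_tendsto' (hu'.min hv') hw'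
        fun n => (hqm _ (hu n) _ (hv n) a ha).1,
      le_of_tendsto_of_tendsto' hw' (hu'.max hv')
        fun n => (hqm _ (hu n) _ (hv n) a ha).2⟩
  · have himg : Γhat '' X = Γ '' X := Set.image_congr hext
    have hord : (Γ '' X).OrdConnected := by
      rw [← himg]
      exact (hX.isPreconnected.image _ (hcont.mono subset_closure)).ordConnected
    have hsub : Γhat '' closure X ⊆ closure (Γ '' X) := by
      rw [← himg]
      exact hcont.image_closure
    refine Set.Subset.antisymm (interior_maximal ?_ isOpen_interior) (interior_mono ?_)
    · intro t ht
      obtain ⟨ε, hε, hball⟩ := Metric.isOpen_iff.1 isOpen_interior t ht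
      have hmem : ∀ s, |s - t| < ε → s ∈ closure (Γ '' X) := fun s hs =>
        hsub (interior_subset (hball (by simpa [Real.dist_eq] using hs)))
      have h1 := hmem (t - ε / 2) (by rw [abs_lt]; constructor <;> linarith)
      have h2 := hmem (t + ε / 2) (by rw [abs_lt]; constructor <;> linarith)
      obtain ⟨p, hpt, hp⟩ := mem_closure_iff.1 h1 (Set.Iio t) isOpen_Iio
        (Set.mem_Iio.2 (by linarith))
      obtain ⟨q, hqt, hq⟩ := mem_closure_iff.1 h2 (Set.Ioi t) isOpen_Ioi
        (Set.mem_Ioi.2 (by linarith))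
      exact hord.out hp hq ⟨le_of_lt hpt, le_of_lt hqt⟩
    · rw [← himg]
      exact Set.image_mono subset_closure
end

section
/- Let E be a normed space, X ⊆ E a convex set, and Γ : X → ℝ a functional that has a continuous and strictly quasi-monotone extension Γ̂ : cl(X) → ℝ to the norm closure of X. Then for every r in the interior of Γ(X) in ℝ one has {x ∈ cl(X) : Γ̂(x) ≥ r} = cl({x ∈ X : Γ(x) ≥ r}), where the closure is taken in E. -/
/-! The set `{Γ̂ ≥ r}` is closed in `cl X`, which gives `⊇`. For `⊆`, continuity of `Γ̂` puts every
point with `Γ̂ > r` in `cl {x ∈ X : Γ x ≥ r}` (`mem_closure_superlevel_of_lt`). A point `x` with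
`Γ̂ x = r` is the limit of the points `(1 - a) x + a y` as `a ↓ 0`, where `y ∈ X` satisfies
`Γ y > r`; such a `y` exists because `r` is interior to `Γ(X)`. By strict quasi-monotonicity
`Γ̂ > r` along this segment, so the previous case applies to its points. -/

/-- `f` is quasi-monotone on the convex set `X`. -/
def QuasiMonotoneOn4 {E : Type*} [AddCommGroup E] [Module ℝ E]
    (X : Set E) (f : E → ℝ) : Prop :=
  ∀ x ∈ X, ∀ y ∈ X, ∀ a ∈ Set.Icc (0 : ℝ) 1,
    min (f x) (f y) ≤ f ((1 - a) • x + a • y) ∧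
      f ((1 - a) • x + a • y) ≤ max (f x) (f y)

/-- `f` is strictly quasi-monotone on the convex set `X`. -/
def StrictlyQuasiMonotoneOn4 {E : Type*} [AddCommGroup E] [Module ℝ E]
    (X : Set E) (f : E → ℝ) : Prop :=
  QuasiMonotoneOn4 X f ∧
    ∀ x ∈ X, ∀ y ∈ X, f x ≠ f y → ∀ a ∈ Set.Ioo (0 : ℝ) 1,
      min (f x) (f y) < f ((1 - a) • x + a • y) ∧
        f ((1 - a) • x + a • y) < max (f x) (f y)

theorem mem_closure_superlevel_of_lt {E : Type*} [TopologicalSpace E]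
    {X : Set E} {Γ Γhat : E → ℝ} (hcont : ContinuousOn Γhat (closure X))
    (hext : ∀ x ∈ X, Γhat x = Γ x) {r : ℝ} {z : E} (hz : z ∈ closure X) (hr : r < Γhat z) :
    z ∈ closure {x ∈ X | r ≤ Γ x} := by
  have hev : ∀ᶠ x in nhdsWithin z X, r < Γhat x :=
    ((hcont z hz).mono subset_closure).eventually (lt_mem_nhds hr)
  rw [mem_closure_iff_frequently]
  have hfr := mem_closure_iff_frequently.1 hz
  rw [eventually_nhdsWithin_iff] at hev
  refine (hfr.and_eventually hev).mono ?_
  rintro x ⟨hx, h⟩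
  exact ⟨hx, hext x hx ▸ (h hx).le⟩

/-- If `Γ` on a convex set `X` of a normed space has a continuous and strictly
quasi-monotone extension `Γ̂` to the closure of `X`, then for every `r` in the
interior of `Γ(X)` one has `{Γ̂ ≥ r} = cl {Γ ≥ r}`. -/
theorem stmt_4 {E : Type*} [NormedAddCommGroup E] [NormedSpace ℝ E]
    (X : Set E) (hX : Convex ℝ X) (Γ Γhat : E → ℝ)
    (hcont : ContinuousOn Γhat (closure X))
    (hsqm : StrictlyQuasiMonotoneOn4 (closure X) Γhat)
    (hext : ∀ x ∈ X, Γhat x = Γ x) :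
    ∀ r ∈ interior (Γ '' X),
      {x ∈ closure X | r ≤ Γhat x} = closure {x ∈ X | r ≤ Γ x} := by
  intro r hr
  apply Set.Subset.antisymm
  · rintro x ⟨hx, hrx⟩
    rcases hrx.lt_or_eq with hlt | heq
    · exact mem_closure_superlevel_of_lt hcont hext hx hlt
    obtain ⟨s, ⟨y, hy, rfl⟩, hs⟩ : ∃ s ∈ Γ '' X, r < s := by
      have hev : ∀ᶠ s in nhdsWithin r (Set.Ioi r), s ∈ Γ '' X :=
        nhdsWithin_le_nhds (mem_interior_iff_mem_nhds.1 hr)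
      obtain ⟨s, hs, hrs⟩ := (hev.and self_mem_nhdsWithin).exists
      exact ⟨s, hs, hrs⟩
    have hy' := subset_closure hy
    have hyr : r < Γhat y := by rwa [hext y hy]
    have hlim : Filter.Tendsto (fun a : ℝ => (1 - a) • x + a • y)
        (nhdsWithin 0 (Set.Ioi 0)) (nhds x) := by
      have hc : Continuous (fun a : ℝ => (1 - a) • x + a • y) := by fun_prop
      have h0 := hc.tendsto 0
      simp only [sub_zero, one_smul, zero_smul, add_zero] at h0
      exact h0.mono_left nhdsWithin_le_nhds
    refine isClosed_closure.mem_of_tendsto hlim ?_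
    filter_upwards [Ioo_mem_nhdsGT (zero_lt_one' ℝ)] with a ha
    refine mem_closure_superlevel_of_lt hcont hext
      (hX.closure hx hy' (by linarith [ha.2]) ha.1.le (by ring)) ?_
    have h := (hsqm.2 x hx y hy' (by rw [← heq]; exact hyr.ne) a ha).1
    rwa [← heq, min_eq_left hyr.le] at h
  · have hclosed : IsClosed {x ∈ closure X | r ≤ Γhat x} :=
      hcont.preimage_isClosed_of_isClosed isClosed_closure isClosed_Ici
    refine closure_minimal ?_ hclosed
    rintro x ⟨hx, hrx⟩
    exact ⟨subset_closure hx, by rwa [hext x hx]⟩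
end

section
/- Let (E, ‖·‖_E) be a normed space, B ⊆ E a non-empty convex subset, H := span(B), and assume B1 and B2. Then: F ⊆ ker(φ'); x⋆ ∉ F; H = F ⊕ ℝ·x⋆ (internal direct sum); the map ‖y + α·x⋆‖_H := ‖y‖_F + ‖α·x⋆‖_E (y ∈ F, α ∈ ℝ) defines a norm ‖·‖_H on H satisfying ‖z‖_E ≤ ‖z‖_H for all z ∈ H and ‖y‖_F = ‖y‖_H for all y ∈ F; and x₁ − x₂ ∈ F for all x₁, x₂ ∈ B. -/
/-!
Every element of `A` is a difference of two points of `B`, so `φ` vanishes on `F`, whereas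
`φ xstar = 1`. Hence `φ` reads off the `xstar`-coordinate: each `z ∈ H` splits as
`(z - φ z • xstar) + φ z • xstar` with first summand in `F`, and the norm on `H` is
`z ↦ nF (z - φ z • xstar) + ‖φ z • xstar‖`, the sum of the norms of two linear projections.
-/

/-- Lemma (F-is-in-kernel): under assumptions B1 and B2 one has `F ⊆ ker φ'`,
`x⋆ ∉ F`, `H = F ⊕ ℝ·x⋆`, the formula `‖y + α x⋆‖_H = ‖y‖_F + ‖α x⋆‖_E` defines a
norm on `H` dominating `‖·‖_E` and agreeing with `‖·‖_F` on `F`, and differences of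
elements of `B` lie in `F`. -/
theorem stmt_5 {E : Type*} [NormedAddCommGroup E] [NormedSpace ℝ E]
    (B : Set E) (hBne : B.Nonempty) (hBconv : Convex ℝ B)
    (H : Submodule ℝ E) (hH : H = Submodule.span ℝ B)
    -- B1
    (φ : E →L[ℝ] ℝ) (hφ : ∀ x ∈ B, φ x = 1)
    -- B2
    (xstar : E) (hxstar : xstar ∈ B)
    (A : Set E) (hA : A = (fun b => -xstar + b) '' B)
    (F : Submodule ℝ E) (hF : F = Submodule.span ℝ A)
    (nF : E → ℝ)
    (hnF_add : ∀ y ∈ F, ∀ z ∈ F, nF (y + z) ≤ nF y + nF z)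
    (hnF_smul : ∀ a : ℝ, ∀ y ∈ F, nF (a • y) = |a| * nF y)
    (hnF_zero : ∀ y ∈ F, (nF y = 0 ↔ y = 0))
    (hnF_dom : ∀ y ∈ F, ‖y‖ ≤ nF y) :
    (∀ y ∈ F, φ y = 0) ∧
    xstar ∉ F ∧
    (F ⊓ Submodule.span ℝ {xstar} = ⊥ ∧ F ⊔ Submodule.span ℝ {xstar} = H) ∧
    (∃ nH : E → ℝ,
      (∀ y ∈ F, ∀ α : ℝ, nH (y + α • xstar) = nF y + ‖α • xstar‖) ∧
      (∀ z ∈ H, ∀ w ∈ H, nH (z + w) ≤ nH z + nH w) ∧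
      (∀ a : ℝ, ∀ z ∈ H, nH (a • z) = |a| * nH z) ∧
      (∀ z ∈ H, (nH z = 0 ↔ z = 0)) ∧
      (∀ z ∈ H, ‖z‖ ≤ nH z) ∧
      (∀ y ∈ F, nF y = nH y)) ∧
    (∀ x₁ ∈ B, ∀ x₂ ∈ B, x₁ - x₂ ∈ F) := by
  have hφx : φ xstar = 1 := hφ _ hxstar
  have hbF : ∀ b ∈ B, b - xstar ∈ F := by
    intro b hb
    rw [hF, hA]
    exact Submodule.subset_span ⟨b, hb, by simp only; abel⟩
  have hker : ∀ y ∈ F, φ y = 0 := by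
    have hle : F ≤ LinearMap.ker (φ : E →ₗ[ℝ] ℝ) := by
      rw [hF, Submodule.span_le, hA]
      rintro _ ⟨b, hb, rfl⟩
      simp [hφ b hb, hφx]
    intro y hy
    simpa using hle hy
  have hxF : xstar ∉ F := fun h => by
    have := hker _ h
    linarith
  have hxH : xstar ∈ H := hH ▸ Submodule.subset_span hxstar
  -- The projection along `xstar` maps the generators `B` of `H` into `F`, hence all of `H`.
  have hproj : ∀ z ∈ H, z - φ z • xstar ∈ F := by
    have hle : H ≤ F.comap (LinearMap.id - (φ : E →ₗ[ℝ] ℝ).smulRight xstar) := by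
      rw [hH, Submodule.span_le]
      intro b hb
      simpa [hφ b hb] using hbF b hb
    intro z hz
    simpa using hle hz
  have hFH : F ≤ H := by
    rw [hF, Submodule.span_le, hA]
    rintro _ ⟨b, hb, rfl⟩
    exact H.add_mem (H.neg_mem hxH) (hH ▸ Submodule.subset_span hb)
  have hnF0 : nF 0 = 0 := (hnF_zero 0 F.zero_mem).2 rfl
  refine ⟨hker, hxF, ⟨?_, ?_⟩,
    ⟨fun z => nF (z - φ z • xstar) + ‖φ z • xstar‖, ?_, ?_, ?_, ?_, ?_, ?_⟩, ?_⟩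
  · rw [eq_bot_iff]
    rintro z ⟨hzF, hz⟩
    obtain ⟨a, rfl⟩ := Submodule.mem_span_singleton.1 hz
    have h := hker _ hzF
    simp [hφx] at h
    simp [h]
  · apply le_antisymm
    · exact sup_le hFH ((Submodule.span_singleton_le_iff_mem _ _).2 hxH)
    · intro z hz
      exact Submodule.mem_sup.2 ⟨_, hproj z hz, φ z • xstar,
        Submodule.smul_mem _ _ (Submodule.mem_span_singleton_self _), by abel⟩
  · intro y hy α
    simp [hker y hy, hφx]
  · intro z hz w hw
    have h1 := hnF_add _ (hproj z hz) _ (hproj w hw)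
    have h2 := norm_add_le (φ z • xstar) (φ w • xstar)
    have h3 : z + w - φ (z + w) • xstar = (z - φ z • xstar) + (w - φ w • xstar) := by
      rw [map_add]
      module
    have h4 : φ (z + w) • xstar = φ z • xstar + φ w • xstar := by
      rw [map_add, add_smul]
    simp only [h3]
    rw [h4]
    linarith
  · intro a z hz
    have h3 : a • z - φ (a • z) • xstar = a • (z - φ z • xstar) := by
      rw [map_smul, smul_eq_mul]
      module
    have h4 : φ (a • z) • xstar = a • (φ z • xstar) := by
      rw [map_smul, smul_eq_mul, mul_smul]
    simp only [h3]
    rw [h4, hnF_smul a _ (hproj z hz), norm_smul, Real.norm_eq_abs]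
    ring
  · intro z hz
    constructor
    · intro h
      have h1 := hnF_dom _ (hproj z hz)
      have h2 := norm_nonneg (z - φ z • xstar)
      have h3 := norm_nonneg (φ z • xstar)
      have h4 : z - φ z • xstar = 0 := norm_eq_zero.1 (by linarith)
      have h5 : φ z • xstar = 0 := norm_eq_zero.1 (by linarith)
      rwa [h5, sub_zero] at h4
    · rintro rfl
      simp [hnF0]
  · intro z hz
    have h1 := hnF_dom _ (hproj z hz)
    have h2 := norm_add_le (z - φ z • xstar) (φ z • xstar)
    rw [sub_add_cancel] at h2
    linarith
  · intro y hy
    simp [hker y hy]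
  · intro x₁ h₁ x₂ h₂
    simpa using F.sub_mem (hbF x₁ h₁) (hbF x₂ h₂)
end

section
/- Let (E, ‖·‖_E) be a normed space, B ⊆ E a non-empty convex subset, H := span(B), and assume B3. Then a linear map z' : H → ℝ is continuous with respect to ‖·‖_E if and only if for every sequence (z_n) ⊆ cone(B) with ‖z_n‖_E → 0 one has z'(z_n) → 0. -/
/-!
Continuity of `z'` trivially gives the sequential condition on the cone. Conversely, a linear map
is continuous as soon as it is sequentially continuous at `0`. If `u n → 0` in `H`, the
decomposition `u n = p n - m n` with `‖m n‖ + ‖p n‖ ≤ K * ‖u n‖` forces both cone sequences `p`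
and `m` to tend to `0`, so `z' (u n) = z' (p n) - z' (m n) → 0`.
-/

/-- Lemma (continuity test): under assumption B3, a linear functional `z' : H → ℝ`
is `‖·‖_E`-continuous iff `z'(z_n) → 0` for every sequence `(z_n) ⊆ cone B` with
`‖z_n‖_E → 0`. -/
theorem stmt_7 {E : Type*} [NormedAddCommGroup E] [NormedSpace ℝ E]
    (B : Set E) (hBne : B.Nonempty) (hBconv : Convex ℝ B)
    (H : Submodule ℝ E) (hH : H = Submodule.span ℝ B)
    (coneB : Set E) (hcone : coneB = {w : E | ∃ a : ℝ, 0 ≤ a ∧ ∃ x ∈ B, w = a • x})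
    -- B3
    (hB3 : ∃ K : ℝ, 0 < K ∧ ∀ z ∈ H, ∃ zp ∈ coneB, ∃ zm ∈ coneB,
      z = zp - zm ∧ ‖zm‖ + ‖zp‖ ≤ K * ‖z‖)
    (z' : H →ₗ[ℝ] ℝ) :
    Continuous ⇑z' ↔
      ∀ u : ℕ → H, (∀ n, (u n : E) ∈ coneB) →
        Filter.Tendsto (fun n => ‖(u n : E)‖) Filter.atTop (nhds 0) →
        Filter.Tendsto (fun n => z' (u n)) Filter.atTop (nhds 0) := by
  have hsub : coneB ⊆ H := by
    rw [hcone, hH]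
    rintro w ⟨a, -, x, hx, rfl⟩
    exact Submodule.smul_mem _ a (Submodule.subset_span hx)
  constructor
  · intro hc u _ hu
    have hu0 : Filter.Tendsto u Filter.atTop (nhds 0) := tendsto_zero_iff_norm_tendsto_zero.2 hu
    simpa [Function.comp_def] using (hc.tendsto 0).comp hu0
  · intro h
    obtain ⟨K, -, hdec⟩ := hB3
    -- `H` is metrizable, so sequential continuity at `0` is enough for the linear map `z'`.
    refine continuous_of_continuousAt_zero z' (Filter.tendsto_of_seq_tendsto fun u hu => ?_)
    rw [map_zero]
    choose p hp m hm hpm hle using fun n => hdec (u n) (u n).2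
    have hK : Filter.Tendsto (fun n => K * ‖(u n : E)‖) Filter.atTop (nhds 0) := by
      simpa using (tendsto_zero_iff_norm_tendsto_zero.1 hu).const_mul K
    have hp0 := h (fun n => ⟨p n, hsub (hp n)⟩) hp
      (squeeze_zero (fun n => norm_nonneg _)
        (fun n => (le_add_of_nonneg_left (norm_nonneg (m n))).trans (hle n)) hK)
    have hm0 := h (fun n => ⟨m n, hsub (hm n)⟩) hm
      (squeeze_zero (fun n => norm_nonneg _)
        (fun n => (le_add_of_nonneg_right (norm_nonneg (p n))).trans (hle n)) hK)
    have hu_eq : ∀ n, u n = ⟨p n, hsub (hp n)⟩ - ⟨m n, hsub (hm n)⟩ :=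
      fun n => Subtype.ext (hpm n)
    have hsplit : (⇑z' ∘ u) = fun n => z' ⟨p n, hsub (hp n)⟩ - z' ⟨m n, hsub (hm n)⟩ := by
      funext n
      rw [Function.comp_apply, hu_eq n, map_sub]
    rw [hsplit]
    simpa using hp0.sub hm0
end

section
/- Let (E, ‖·‖_E) be a normed space, B ⊆ E non-empty and convex, and Γ : B → ℝ satisfy assumptions B2* and G1. Then for every r ∈ I, where I is the interior of Γ(B) in ℝ, there exists x ∈ B with Γ(x) = r such that −x⋆ + x lies in the interior of A in the normed space (F, ‖·‖_F). -/
/-!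
Points `x₁, x₂ ∈ B` with `Γ x₁ < r < Γ x₂` exist because `r` is interior to the image. Pulling both
towards `xstar` by a common factor `t < 1` close to `1` keeps these strict inequalities, by continuity
of `Γ` along segments (`continuousOn_segment_of_nF`). Since `A` is convex and contains a ball of radius
`ε` around `0`, every point of `t • A` is the centre of a ball of radius `(1 - t) * ε` contained in `A`.
The whole segment joining the two contracted points lies in `xstar + t • A`, and the intermediate value
theorem on it yields a point where `Γ = r`.
-/

/-- A function continuous on the convex set `B` for the distance `nF (y - x)` is continuous along
segments in `B` for the usual topology of the parameter interval, because `nF` is homogeneous. -/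
lemma continuousOn_segment_of_nF {E : Type*} [NormedAddCommGroup E] [NormedSpace ℝ E]
    {B : Set E} (hB : Convex ℝ B) {F : Submodule ℝ E} {nF : E → ℝ}
    (hsmul : ∀ a : ℝ, ∀ y ∈ F, nF (a • y) = |a| * nF y)
    (hdom : ∀ y ∈ F, ‖y‖ ≤ nF y) {Γ : E → ℝ}
    (hcont : ∀ x ∈ B, ∀ ε > 0, ∃ δ > 0, ∀ y ∈ B, nF (y - x) < δ → |Γ y - Γ x| < ε)
    {p q : E} (hp : p ∈ B) (hq : q ∈ B) (hpq : q - p ∈ F) :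
    ContinuousOn (fun s : ℝ => Γ (p + s • (q - p))) (Set.Icc 0 1) := by
  rw [Metric.continuousOn_iff]
  intro s hs ε hε
  obtain ⟨δ, hδ, h⟩ := hcont _ (hB.add_smul_sub_mem hp hq hs) ε hε
  have hn : 0 ≤ nF (q - p) := (norm_nonneg _).trans (hdom _ hpq)
  refine ⟨δ / (nF (q - p) + 1), by positivity, fun s' hs' hd => ?_⟩
  refine h _ (hB.add_smul_sub_mem hp hq hs') ?_
  have e : p + s' • (q - p) - (p + s • (q - p)) = (s' - s) • (q - p) := by module
  rw [e, hsmul _ _ hpq]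
  rw [Real.dist_eq, lt_div_iff₀ (by positivity)] at hd
  nlinarith [abs_nonneg (s' - s)]

/-- Lemma (all-interiors): under B2* and G1, every level `r` in the interior of the
image `Γ(B)` is attained at some `x ∈ B` such that `-x⋆ + x` is an interior point of
`A` in the normed space `(F, ‖·‖_F)`. -/
theorem stmt_8 {E : Type*} [NormedAddCommGroup E] [NormedSpace ℝ E]
    (B : Set E) (hBne : B.Nonempty) (hBconv : Convex ℝ B)
    -- B2
    (xstar : E) (hxstar : xstar ∈ B)
    (A : Set E) (hA : A = (fun b => -xstar + b) '' B)
    (F : Submodule ℝ E) (hF : F = Submodule.span ℝ A)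
    (nF : E → ℝ)
    (hnF_add : ∀ y ∈ F, ∀ z ∈ F, nF (y + z) ≤ nF y + nF z)
    (hnF_smul : ∀ a : ℝ, ∀ y ∈ F, nF (a • y) = |a| * nF y)
    (hnF_zero : ∀ y ∈ F, (nF y = 0 ↔ y = 0))
    (hnF_dom : ∀ y ∈ F, ‖y‖ ≤ nF y)
    -- B2*: 0 is an interior point of A in (F, ‖·‖_F)
    (hB2star : ∃ ε > 0, ∀ z ∈ F, nF z ≤ ε → z ∈ A)
    (Γ : E → ℝ)
    -- G1: ‖·‖_F-continuity and convex level sets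
    (hG1cont : ∀ x ∈ B, ∀ ε > 0, ∃ δ > 0, ∀ y ∈ B, nF (y - x) < δ → |Γ y - Γ x| < ε)
    (hG1lvl : ∀ r ∈ Γ '' B, Convex ℝ {x ∈ B | Γ x = r}) :
    ∀ r ∈ interior (Γ '' B), ∃ x ∈ B, Γ x = r ∧
      ∃ ε > 0, ∀ z ∈ F, nF (z - (-xstar + x)) ≤ ε → z ∈ A := by
  intro r hr
  have hcontr := @continuousOn_segment_of_nF E _ _ B hBconv F nF hnF_smul hnF_dom Γ hG1cont
  have hAF : ∀ b ∈ B, b - xstar ∈ F := by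
    intro b hb
    rw [hF]
    exact Submodule.subset_span (hA ▸ ⟨b, hb, by simp only []; abel⟩)
  have hmemA : ∀ y, y ∈ A ↔ xstar + y ∈ B := by
    intro y
    rw [hA]
    constructor
    · rintro ⟨b, hb, rfl⟩
      simpa using hb
    · intro h
      exact ⟨_, h, by simp⟩
  obtain ⟨η, hη, hball⟩ := Metric.mem_nhds_iff.1 (mem_interior_iff_mem_nhds.1 hr)
  obtain ⟨x₁, hx₁, h₁⟩ : r - η / 2 ∈ Γ '' B := hball (by
    rw [Metric.mem_ball, Real.dist_eq, abs_lt]; constructor <;> linarith)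
  obtain ⟨x₂, hx₂, h₂⟩ : r + η / 2 ∈ Γ '' B := hball (by
    rw [Metric.mem_ball, Real.dist_eq, abs_lt]; constructor <;> linarith)
  have hsub : nhdsWithin (1 : ℝ) (Set.Ioo 0 1) ≤ nhdsWithin 1 (Set.Icc 0 1) :=
    nhdsWithin_mono _ Set.Ioo_subset_Icc_self
  have e₁ : ∀ᶠ t in nhdsWithin (1 : ℝ) (Set.Ioo 0 1), Γ (xstar + t • (x₁ - xstar)) < r := by
    have := (hcontr hxstar hx₁ (hAF _ hx₁) 1 (by simp)).mono_left hsub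
    exact this.eventually_lt_const (by simp [h₁]; linarith)
  have e₂ : ∀ᶠ t in nhdsWithin (1 : ℝ) (Set.Ioo 0 1), r < Γ (xstar + t • (x₂ - xstar)) := by
    have := (hcontr hxstar hx₂ (hAF _ hx₂) 1 (by simp)).mono_left hsub
    exact this.eventually_const_lt (by simp [h₂]; linarith)
  have : (nhdsWithin (1 : ℝ) (Set.Ioo 0 1)).NeBot := right_nhdsWithin_Ioo_neBot (by norm_num)
  obtain ⟨t, ⟨ht₁, ht₂⟩, ht0, ht1⟩ := ((e₁.and e₂).and self_mem_nhdsWithin).exists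
  have hy₁ := hBconv.add_smul_sub_mem hxstar hx₁ ⟨ht0.le, ht1.le⟩
  have hy₂ := hBconv.add_smul_sub_mem hxstar hx₂ ⟨ht0.le, ht1.le⟩
  have hdiff : xstar + t • (x₂ - xstar) - (xstar + t • (x₁ - xstar)) ∈ F := by
    have := F.sub_mem (hAF _ hy₂) (hAF _ hy₁)
    simpa using this
  have hIVT := intermediate_value_Icc (zero_le_one' ℝ) (hcontr hy₁ hy₂ hdiff)
  obtain ⟨s, hs, hsr⟩ := hIVT (show r ∈ _ from ⟨by simpa using ht₁.le, by simpa using ht₂.le⟩)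
  refine ⟨_, hBconv.add_smul_sub_mem hy₁ hy₂ hs, hsr, ?_⟩
  obtain ⟨ε, hε, hεA⟩ := hB2star
  -- The point found is the contraction by `t` of the point `b` of the segment `[x₁, x₂]`.
  have hb := hBconv.add_smul_sub_mem hx₁ hx₂ hs
  set b := x₁ + s • (x₂ - x₁) with hbdef
  have h1t : 0 < 1 - t := by linarith
  refine ⟨(1 - t) * ε, by positivity, fun z hz hzn => ?_⟩
  have hpt : -xstar + (xstar + t • (x₁ - xstar) +
      s • (xstar + t • (x₂ - xstar) - (xstar + t • (x₁ - xstar)))) = t • (b - xstar) := by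
    rw [hbdef]; module
  rw [hpt] at hzn
  have hzF : z - t • (b - xstar) ∈ F := F.sub_mem hz (F.smul_mem _ (hAF _ hb))
  -- Then `z = (1 - t) • w + t • (b - xstar)` with `w` in the ball of radius `ε` around `0`.
  have hw : (1 - t)⁻¹ • (z - t • (b - xstar)) ∈ A := by
    refine hεA _ (F.smul_mem _ hzF) ?_
    rw [hnF_smul _ _ hzF, abs_of_pos (inv_pos.2 h1t), inv_mul_le_iff₀ h1t]
    exact hzn
  rw [hmemA] at hw ⊢
  have := hBconv hw hb h1t.le ht0.le (by ring)
  rw [smul_add, smul_smul, mul_inv_cancel₀ h1t.ne', one_smul] at this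
  convert this using 1
  module
end

section
/- Let (E, ‖·‖_E) be a normed space, B ⊆ E non-empty and convex, and assume B2*. Let K ⊆ A be a subset whose interior relative to A in (F, ‖·‖_F) is non-empty. Then for every y in the interior of K relative to A there exists δ_y ∈ (0, 1/2] such that (1−δ)·y lies in the interior of K in (F, ‖·‖_F) for all δ ∈ (0, δ_y]. In particular, the interior of K in (F, ‖·‖_F) is non-empty. -/
/-!
Let `r` be the radius of an `F`-ball around `0` contained in `A`, and let `y ∈ K` be such that the
points of `A` within `ε` of `y` lie in `K`. A point `z = (1 - δ) • y + u` with `‖u‖_F ≤ δ r` is the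
convex combination `(1 - δ) • y + δ • (δ⁻¹ • u)` of the points `y` and `δ⁻¹ • u` of `A`, hence is in
`A`. Moreover `‖z - y‖_F ≤ ‖u‖_F + δ ‖y‖_F`, which is at most `ε` once both summands are at most
`ε / 2`. So `z ∈ K`.
-/

/-- Lemma (relative-interiors): under B2*, if `K ⊆ A` has non-empty interior relative
to `A` in `(F, ‖·‖_F)`, then for every `y` in this relative interior there is
`δ_y ∈ (0, 1/2]` such that `(1-δ)·y` is an interior point of `K` in `(F, ‖·‖_F)` for
all `δ ∈ (0, δ_y]`; in particular the interior of `K` in `(F, ‖·‖_F)` is non-empty. -/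
theorem stmt_9 {E : Type*} [NormedAddCommGroup E] [NormedSpace ℝ E]
    (B : Set E) (hBne : B.Nonempty) (hBconv : Convex ℝ B)
    -- B2
    (xstar : E) (hxstar : xstar ∈ B)
    (A : Set E) (hA : A = (fun b => -xstar + b) '' B)
    (F : Submodule ℝ E) (hF : F = Submodule.span ℝ A)
    (nF : E → ℝ)
    (hnF_add : ∀ y ∈ F, ∀ z ∈ F, nF (y + z) ≤ nF y + nF z)
    (hnF_smul : ∀ a : ℝ, ∀ y ∈ F, nF (a • y) = |a| * nF y)
    (hnF_zero : ∀ y ∈ F, (nF y = 0 ↔ y = 0))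
    (hnF_dom : ∀ y ∈ F, ‖y‖ ≤ nF y)
    -- B2*: 0 is an interior point of A in (F, ‖·‖_F)
    (hB2star : ∃ ε > 0, ∀ z ∈ F, nF z ≤ ε → z ∈ A)
    (K : Set E) (hKA : K ⊆ A)
    -- the interior of K relative to A in (F, ‖·‖_F) is non-empty
    (hKrel : ∃ y ∈ K, ∃ ε > 0, ∀ z ∈ A, nF (z - y) ≤ ε → z ∈ K) :
    (∀ y ∈ K, (∃ ε > 0, ∀ z ∈ A, nF (z - y) ≤ ε → z ∈ K) →
      ∃ δy : ℝ, 0 < δy ∧ δy ≤ 1 / 2 ∧ ∀ δ : ℝ, 0 < δ → δ ≤ δy →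
        (1 - δ) • y ∈ F ∧ ∃ ε > 0, ∀ z ∈ F, nF (z - (1 - δ) • y) ≤ ε → z ∈ K) ∧
    (∃ w ∈ F, ∃ ε > 0, ∀ z ∈ F, nF (z - w) ≤ ε → z ∈ K) := by
  have hAconv : Convex ℝ A := by
    rw [hA]
    exact hBconv.translate (-xstar)
  have hAF : ∀ a ∈ A, a ∈ F := fun a ha => hF ▸ Submodule.subset_span ha
  obtain ⟨r, hr, hball⟩ := hB2star
  have main : ∀ y ∈ K, (∃ ε > 0, ∀ z ∈ A, nF (z - y) ≤ ε → z ∈ K) →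
      ∃ δy : ℝ, 0 < δy ∧ δy ≤ 1 / 2 ∧ ∀ δ : ℝ, 0 < δ → δ ≤ δy →
        (1 - δ) • y ∈ F ∧ ∃ ε > 0, ∀ z ∈ F, nF (z - (1 - δ) • y) ≤ ε → z ∈ K := by
    rintro y hy ⟨ε, hε, hK⟩
    have hyF : y ∈ F := hAF y (hKA hy)
    have hN : 0 ≤ nF y := (norm_nonneg y).trans (hnF_dom y hyF)
    -- `nF y + 1` keeps the denominator positive when `y = 0`.
    refine ⟨min (1 / 2) (ε / (2 * (nF y + 1))), by positivity, min_le_left _ _, ?_⟩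
    intro δ hδ hδy
    have hδ_half : δ ≤ 1 / 2 := hδy.trans (min_le_left _ _)
    have hδN : δ * (2 * (nF y + 1)) ≤ ε :=
      (le_div_iff₀ (by positivity)).1 (hδy.trans (min_le_right _ _))
    have hyδ : (1 - δ) • y ∈ F := F.smul_mem _ hyF
    refine ⟨hyδ, min (δ * r) (ε / 2), by positivity, ?_⟩
    intro z hz hzy
    obtain ⟨u, hu⟩ : ∃ u, u = z - (1 - δ) • y := ⟨_, rfl⟩
    rw [← hu] at hzy
    have huF : u ∈ F := hu ▸ F.sub_mem hz hyδ
    have huA : δ⁻¹ • u ∈ A := by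
      refine hball _ (F.smul_mem _ huF) ?_
      rw [hnF_smul _ _ huF, abs_of_pos (inv_pos.2 hδ), inv_mul_le_iff₀ hδ]
      exact hzy.trans (min_le_left _ _)
    have hzA : z ∈ A := by
      have h := hAconv (hKA hy) huA (by linarith : 0 ≤ 1 - δ) hδ.le (by ring)
      rwa [smul_inv_smul₀ hδ.ne', hu, add_sub_cancel] at h
    refine hK z hzA ?_
    have hsplit : z - y = u + (-δ) • y := by
      rw [hu]
      module
    have hadd := hnF_add u huF _ (F.smul_mem (-δ) hyF)
    rw [hnF_smul _ _ hyF, abs_neg, abs_of_pos hδ] at hadd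
    rw [hsplit]
    linarith [hzy.trans (min_le_right _ _)]
  refine ⟨main, ?_⟩
  obtain ⟨y, hy, hrel⟩ := hKrel
  obtain ⟨δ, hδ, -, h⟩ := main y hy hrel
  exact ⟨_, h δ hδ le_rfl⟩
end

section
/- Let (E, ‖·‖_E) be a normed space, B ⊆ E non-empty and convex, and assume B2*. Let K₋, K₊ ⊆ A be convex sets whose interiors relative to A in (F, ‖·‖_F) are non-empty and such that K₋ is disjoint from the interior of K₊ in (F, ‖·‖_F). Then there exist a ‖·‖_F-continuous linear functional y' : F → ℝ and s ∈ ℝ such that: K₋ ⊆ {y' ≤ s} and the interior of K₋ in (F,‖·‖_F) is contained in {y' < s}; K₊ ⊆ {y' ≥ s} and the interior of K₊ in (F,‖·‖_F) is contained in {y' > s}. Moreover, if s ≤ 0 then the interior of K₋ relative to A is contained in {y' < s}, and if s ≥ 0 then the interior of K₊ relative to A is contained in {y' > s}. -/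
/-!
Shrinking towards `0` turns relative interior points into interior points: if `K` is a neighbourhood
of `y` relative to the convex set `A`, and `0` is interior to `A`, then `(1 - t) • y` is interior
to `A` and, for small `t > 0`, close to `y`, hence interior to `K`
(`exists_smul_mem_interior`). In particular `K₊` has non-empty interior;
Hahn–Banach separates `K₋` from the interior of `K₊`; by convexity `K₊` lies in the closure of its
interior, which extends the inequality to `K₊`. The functional is non-zero, so it cannot attain its
maximum over `K₋` at an interior point. Finally, if `y' y = s` at a relative interior point `y` of
`K₋`, then `(1 - t) s < s`, which forces `s > 0`; symmetrically for `K₊`.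

The argument takes place in an abstract normed space (`weak_separation`) and is transferred to
`(F, ‖·‖_F)`, whose norm need not be the one induced from `E`, by `weak_separation_of_norm`.
-/

open Set Filter Topology

/-- A relative interior point of `K` in `A` becomes an interior point of `K` when moved slightly
towards the interior point `0` of `A`. -/
lemma exists_smul_mem_interior {V : Type*} [NormedAddCommGroup V] [NormedSpace ℝ V]
    {A K : Set V} (hA : Convex ℝ A) (h0 : (0 : V) ∈ interior A) {y : V} (hy : y ∈ A)
    (hK : K ∈ 𝓝[A] y) : ∃ t : ℝ, 0 < t ∧ (1 - t) • y ∈ interior K := by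
  obtain ⟨U, hU, hyU, hUK⟩ := mem_nhdsWithin.1 hK
  have hlim : Tendsto (fun t : ℝ => (1 - t) • y) (𝓝[>] 0) (𝓝 y) := by
    have : Continuous (fun t : ℝ => (1 - t) • y) := by fun_prop
    have := this.tendsto 0
    simp only [sub_zero, one_smul] at this
    exact this.mono_left nhdsWithin_le_nhds
  have h1 : ∀ᶠ t : ℝ in 𝓝[>] 0, (1 - t) • y ∈ U := hlim (hU.mem_nhds hyU)
  have h2 : ∀ᶠ t : ℝ in 𝓝[>] 0, t ∈ Ioo (0 : ℝ) 1 := Ioo_mem_nhdsGT one_pos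
  obtain ⟨t, htU, ht0, ht1⟩ := (h1.and h2).exists
  have hint : (1 - t) • y ∈ interior A := by
    have := hA.combo_interior_self_mem_interior h0 hy ht0 (sub_nonneg.2 ht1.le) (by ring)
    simpa using this
  exact ⟨t, ht0, interior_maximal (fun z hz => hUK ⟨hz.1, interior_subset hz.2⟩)
    (hU.inter isOpen_interior) ⟨htU, hint⟩⟩

/-- The separation statement in a normed space, with `K ∈ 𝓝[A] y` expressing that `y` is a
relative interior point of `K` in `A`. -/
lemma weak_separation {V : Type*} [NormedAddCommGroup V] [NormedSpace ℝ V]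
    {A Km Kp : Set V} (hA : Convex ℝ A) (h0 : (0 : V) ∈ interior A)
    (hKmA : Km ⊆ A) (hKpA : Kp ⊆ A) (hKm : Convex ℝ Km) (hKp : Convex ℝ Kp)
    (hKprel : ∃ y ∈ Kp, Kp ∈ 𝓝[A] y)
    (hdisj : ∀ y ∈ Km, y ∉ interior Kp) :
    ∃ (f : V →L[ℝ] ℝ) (s : ℝ),
      (∀ y ∈ Km, f y ≤ s) ∧ (∀ y ∈ interior Km, f y < s) ∧
      (∀ y ∈ Kp, s ≤ f y) ∧ (∀ y ∈ interior Kp, s < f y) ∧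
      (s ≤ 0 → ∀ y ∈ Km, Km ∈ 𝓝[A] y → f y < s) ∧
      (0 ≤ s → ∀ y ∈ Kp, Kp ∈ 𝓝[A] y → s < f y) := by
  obtain ⟨p, hp, hprel⟩ := hKprel
  obtain ⟨tp, -, hq⟩ := exists_smul_mem_interior hA h0 (hKpA hp) hprel
  obtain ⟨f, s, hfm, hfp⟩ : ∃ (f : V →L[ℝ] ℝ) (s : ℝ),
      (∀ y ∈ Km, f y ≤ s) ∧ ∀ y ∈ interior Kp, s < f y := by
    obtain ⟨g, u, hgp, hgm⟩ := geometric_hahn_banach_open hKp.interior isOpen_interior hKm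
      (Set.disjoint_right.2 hdisj)
    exact ⟨-g, -u, fun y hy => neg_le_neg (hgm y hy), fun y hy => neg_lt_neg (hgp y hy)⟩
  have hKp_ge : ∀ y ∈ Kp, s ≤ f y := by
    have hcl : closure (interior Kp) ⊆ {y | s ≤ f y} :=
      closure_minimal (fun y hy => (hfp y hy).le) (isClosed_le continuous_const f.continuous)
    intro y hy
    apply hcl
    rw [hKp.closure_interior_eq_closure_of_nonempty_interior ⟨_, hq⟩]
    exact subset_closure hy
  have hm_lt : ∀ y ∈ interior Km, f y < s := by
    intro y hy
    refine lt_of_le_of_ne (hfm y (interior_subset hy)) fun heq => ?_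
    -- Moving from `y` towards the interior point `q` of `Kp` increases `f` while staying in `Km`.
    set q := (1 - tp) • p
    have hc : Continuous (fun t : ℝ => y + t • (q - y)) := by fun_prop
    have hlim : ∀ᶠ t : ℝ in 𝓝 0, y + t • (q - y) ∈ interior Km :=
      hc.continuousAt.eventually_mem (by simpa using isOpen_interior.mem_nhds hy)
    obtain ⟨t, ht, ht0⟩ :=
      ((hlim.filter_mono nhdsWithin_le_nhds).and (self_mem_nhdsWithin (s := Ioi (0 : ℝ)))).exists
    have h1 := hfm _ (interior_subset ht)
    have h2 := hfp q hq
    simp only [map_add, map_smul, map_sub, smul_eq_mul, heq] at h1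
    nlinarith [mul_pos (show (0 : ℝ) < t from ht0) (sub_pos.2 h2)]
  refine ⟨f, s, hfm, hm_lt, hKp_ge, hfp, fun hs y hy hyr => ?_, fun hs y hy hyr => ?_⟩
  · obtain ⟨t, ht, hti⟩ := exists_smul_mem_interior hA h0 (hKmA hy) hyr
    have h1 := hm_lt _ hti
    refine lt_of_le_of_ne (hfm y hy) fun heq => ?_
    rw [map_smul, smul_eq_mul, heq] at h1
    nlinarith
  · obtain ⟨t, ht, hti⟩ := exists_smul_mem_interior hA h0 (hKpA hy) hyr
    have h1 := hfp _ hti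
    refine lt_of_le_of_ne (hKp_ge y hy) fun heq => ?_
    rw [map_smul, smul_eq_mul, ← heq] at h1
    nlinarith

lemma mem_nhdsWithin_iff_norm {V : Type*} [NormedAddCommGroup V] {A K : Set V} {y : V} :
    K ∈ 𝓝[A] y ↔ ∃ ε > 0, ∀ z ∈ A, ‖z - y‖ ≤ ε → z ∈ K := by
  rw [(nhdsWithin_hasBasis Metric.nhds_basis_closedBall A).mem_iff]
  refine exists_congr fun ε => and_congr_right fun _ => ?_
  simp only [subset_def, mem_inter_iff, mem_closedBall_iff_norm]
  exact ⟨fun h z hz hn => h z ⟨hn, hz⟩, fun h z hz => h z hz.2 hz.1⟩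

lemma mem_interior_iff_norm {V : Type*} [NormedAddCommGroup V] {K : Set V} {y : V} :
    y ∈ interior K ↔ ∃ ε > 0, ∀ z, ‖z - y‖ ≤ ε → z ∈ K := by
  rw [mem_interior_iff_mem_nhds, ← nhdsWithin_univ, mem_nhdsWithin_iff_norm]
  simp

/-- `weak_separation` for a norm given as a plain function `n` on a vector space without
topology, so that it applies to a subspace carrying a norm other than the induced one. -/
lemma weak_separation_of_norm {V : Type*} [AddCommGroup V] [Module ℝ V] (n : V → ℝ)
    (n_nonneg : ∀ y, 0 ≤ n y) (n_add : ∀ y z, n (y + z) ≤ n y + n z)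
    (n_smul : ∀ (a : ℝ) y, n (a • y) = |a| * n y) (n_zero : ∀ y, n y = 0 ↔ y = 0)
    {A Km Kp : Set V} (hA : Convex ℝ A) (h0 : ∃ ε > 0, ∀ z, n z ≤ ε → z ∈ A)
    (hKmA : Km ⊆ A) (hKpA : Kp ⊆ A) (hKm : Convex ℝ Km) (hKp : Convex ℝ Kp)
    (hKprel : ∃ y ∈ Kp, ∃ ε > 0, ∀ z ∈ A, n (z - y) ≤ ε → z ∈ Kp)
    (hdisj : ∀ y ∈ Km, ¬ ∃ ε > 0, ∀ z, n (z - y) ≤ ε → z ∈ Kp) :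
    ∃ (f : V →ₗ[ℝ] ℝ) (C s : ℝ),
      (∀ y, |f y| ≤ C * n y) ∧
      (∀ y ∈ Km, f y ≤ s) ∧
      (∀ y, (∃ ε > 0, ∀ z, n (z - y) ≤ ε → z ∈ Km) → f y < s) ∧
      (∀ y ∈ Kp, s ≤ f y) ∧
      (∀ y, (∃ ε > 0, ∀ z, n (z - y) ≤ ε → z ∈ Kp) → s < f y) ∧
      (s ≤ 0 → ∀ y ∈ Km, (∃ ε > 0, ∀ z ∈ A, n (z - y) ≤ ε → z ∈ Km) → f y < s) ∧
      (0 ≤ s → ∀ y ∈ Kp, (∃ ε > 0, ∀ z ∈ A, n (z - y) ≤ ε → z ∈ Kp) → s < f y) := by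
  let : Norm V := ⟨n⟩
  have core : NormedSpace.Core ℝ V := ⟨⟨n_nonneg, n_smul, n_add⟩, n_zero⟩
  let : NormedAddCommGroup V := NormedAddCommGroup.ofCore core
  let : NormedSpace ℝ V := NormedSpace.ofCore core
  have hn : ∀ y : V, n y = ‖y‖ := fun _ => rfl
  simp only [hn, ← mem_nhdsWithin_iff_norm, ← mem_interior_iff_norm] at *
  have h0' : (0 : V) ∈ interior A := mem_interior_iff_norm.2 (by simpa using h0)
  obtain ⟨f, s, h⟩ := weak_separation hA h0' hKmA hKpA hKm hKp hKprel hdisj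
  exact ⟨f.toLinearMap, ‖f‖, s, f.le_opNorm, h⟩

/-- Lemma (weak separation in A): under B2*, two convex subsets `K₋, K₊ ⊆ A` with
non-empty relative interiors in `A`, such that `K₋` misses the interior of `K₊` in
`(F, ‖·‖_F)`, can be separated by a `‖·‖_F`-continuous linear functional `y'` on `F`
and a threshold `s`, with the listed strict separations on interiors, and with the
stronger relative-interior separations when `s ≤ 0` resp. `s ≥ 0`. -/
theorem stmt_10 {E : Type*} [NormedAddCommGroup E] [NormedSpace ℝ E]
    (B : Set E) (hBne : B.Nonempty) (hBconv : Convex ℝ B)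
    -- B2
    (xstar : E) (hxstar : xstar ∈ B)
    (A : Set E) (hA : A = (fun b => -xstar + b) '' B)
    (F : Submodule ℝ E) (hF : F = Submodule.span ℝ A)
    (nF : E → ℝ)
    (hnF_add : ∀ y ∈ F, ∀ z ∈ F, nF (y + z) ≤ nF y + nF z)
    (hnF_smul : ∀ a : ℝ, ∀ y ∈ F, nF (a • y) = |a| * nF y)
    (hnF_zero : ∀ y ∈ F, (nF y = 0 ↔ y = 0))
    (hnF_dom : ∀ y ∈ F, ‖y‖ ≤ nF y)
    -- B2*: 0 is an interior point of A in (F, ‖·‖_F)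
    (hB2star : ∃ ε > 0, ∀ z ∈ F, nF z ≤ ε → z ∈ A)
    (Km Kp : Set E) (hKmA : Km ⊆ A) (hKpA : Kp ⊆ A)
    (hKmconv : Convex ℝ Km) (hKpconv : Convex ℝ Kp)
    -- non-empty interiors relative to A in (F, ‖·‖_F)
    (hKmrel : ∃ y ∈ Km, ∃ ε > 0, ∀ z ∈ A, nF (z - y) ≤ ε → z ∈ Km)
    (hKprel : ∃ y ∈ Kp, ∃ ε > 0, ∀ z ∈ A, nF (z - y) ≤ ε → z ∈ Kp)
    -- K₋ is disjoint from the interior of K₊ in (F, ‖·‖_F)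
    (hdisj : ∀ y ∈ Km, ¬ ∃ ε > 0, ∀ z ∈ F, nF (z - y) ≤ ε → z ∈ Kp) :
    ∃ (y' : F →ₗ[ℝ] ℝ) (C s : ℝ),
      (∀ y : F, |y' y| ≤ C * nF y) ∧
      (∀ y : F, (y : E) ∈ Km → y' y ≤ s) ∧
      (∀ y : F, (∃ ε > 0, ∀ z ∈ F, nF (z - (y : E)) ≤ ε → z ∈ Km) → y' y < s) ∧
      (∀ y : F, (y : E) ∈ Kp → s ≤ y' y) ∧
      (∀ y : F, (∃ ε > 0, ∀ z ∈ F, nF (z - (y : E)) ≤ ε → z ∈ Kp) → s < y' y) ∧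
      (s ≤ 0 → ∀ y : F, (y : E) ∈ Km →
        (∃ ε > 0, ∀ z ∈ A, nF (z - (y : E)) ≤ ε → z ∈ Km) → y' y < s) ∧
      (0 ≤ s → ∀ y : F, (y : E) ∈ Kp →
        (∃ ε > 0, ∀ z ∈ A, nF (z - (y : E)) ≤ ε → z ∈ Kp) → s < y' y) := by
  have hAF : ∀ z ∈ A, z ∈ F := fun z hz => hF ▸ Submodule.subset_span hz
  have hAconv : Convex ℝ A := hA ▸ hBconv.translate (-xstar)
  obtain ⟨f, C, s, h1, h2, h3, h4, h5, h6, h7⟩ :=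
    weak_separation_of_norm (V := F) (fun y => nF y)
      (fun y => (norm_nonneg _).trans (hnF_dom y y.2))
      (fun y z => hnF_add y y.2 z z.2) (fun a y => hnF_smul a y y.2)
      (fun y => by simpa using hnF_zero y y.2)
      (A := F.subtype ⁻¹' A) (Km := F.subtype ⁻¹' Km) (Kp := F.subtype ⁻¹' Kp)
      (hAconv.linear_preimage _)
      (by
        obtain ⟨ε, hε, h⟩ := hB2star
        exact ⟨ε, hε, fun z hz => h z z.2 hz⟩)
      (preimage_mono hKmA) (preimage_mono hKpA)
      (hKmconv.linear_preimage _) (hKpconv.linear_preimage _)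
      (by
        obtain ⟨y, hy, ε, hε, h⟩ := hKprel
        exact ⟨⟨y, hAF y (hKpA hy)⟩, hy, ε, hε, fun z hz hn => h z hz hn⟩)
      (by
        rintro y hy ⟨ε, hε, h⟩
        exact hdisj y hy ⟨ε, hε, fun z hz hn => h ⟨z, hz⟩ hn⟩)
  refine ⟨f, C, s, h1, h2, ?_, h4, ?_, ?_, ?_⟩
  · rintro y ⟨ε, hε, h⟩
    exact h3 y ⟨ε, hε, fun z hn => h z z.2 hn⟩
  · rintro y ⟨ε, hε, h⟩
    exact h5 y ⟨ε, hε, fun z hn => h z z.2 hn⟩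
  · rintro hs y hy ⟨ε, hε, h⟩
    exact h6 hs y hy ⟨ε, hε, fun z hz hn => h z hz hn⟩
  · rintro hs y hy ⟨ε, hε, h⟩
    exact h7 hs y hy ⟨ε, hε, fun z hz hn => h z hz hn⟩
end

section
/- Let (E, ‖·‖_E) be a normed space, B ⊆ E non-empty and convex, and assume B2*. Let K₋, K₀, K₊ ⊆ A be mutually disjoint, non-empty, convex sets with A = K₋ ∪ K₀ ∪ K₊, such that K₋ and K₊ each equal their interior relative to A in (F, ‖·‖_F), and such that for all y ∈ K₀ and ε > 0 one has K₋ ∩ (y + ε·B_F) ≠ ∅ and K₊ ∩ (y + ε·B_F) ≠ ∅. Then there exist a ‖·‖_F-continuous linear functional y' : F → ℝ and s ∈ ℝ such that K₋ = {y ∈ A : y'(y) < s}, K₀ = {y ∈ A : y'(y) = s}, and K₊ = {y ∈ A : y'(y) > s}. -/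
/-!
The sets `K₋` and `K₊` may touch the boundary of `A`, so Hahn–Banach is applied to the open convex
sets `K₋ ∩ int A` and `K₊ ∩ int A`, which are non-empty because segments from a point of `A` to an
interior point of `A` run through `int A` (`exists_segment_mem_interior`). This gives `y'` and `s`
with `y' < s` on the first set and `y' > s` on the second. The strict inequalities extend to all of
`K₋` and `K₊` (`lt_of_lt_on_interior`): if `y ∈ K₋` had `y' y ≥ s`, moving slightly from `y` towards
a point `b ∈ K₊ ∩ int A` would stay in `K₋`, enter `int A`, and keep `y' ≥ s`. Points of `K₀` are
limits of points of both sets, so `y' = s` there by continuity, and since the three sets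
cover `A`, trichotomy turns these implications into equivalences.

The argument is carried out in an abstract normed space and then transferred to the subspace `F`
with its own norm `nF`, which differs from the norm inherited from `E`.
-/

section Normed

variable {V : Type*} [NormedAddCommGroup V] [NormedSpace ℝ V]

/-- Moving slightly from a point of a relatively open set `K ⊆ A` towards an interior point of `A`
stays in `K` and enters the interior of `A`. -/
lemma exists_segment_mem_interior {A K : Set V} (hA : Convex ℝ A) (hKA : K ⊆ A)
    (hK : ∀ y ∈ K, ∃ ε > 0, ∀ z ∈ A, ‖z - y‖ ≤ ε → z ∈ K)
    {y b : V} (hy : y ∈ K) (hb : b ∈ interior A) :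
    ∃ t : ℝ, 0 < t ∧ t < 1 ∧ y + t • (b - y) ∈ K ∩ interior A := by
  obtain ⟨ε, hε, h⟩ := hK y hy
  have hpos : 0 < ‖b - y‖ + 1 := by positivity
  have ht : 0 < min (1 / 2) (ε / (‖b - y‖ + 1)) := lt_min (by norm_num) (by positivity)
  have ht1 : min (1 / 2) (ε / (‖b - y‖ + 1)) < 1 :=
    (min_le_left _ _).trans_lt (by norm_num)
  have ht2 : min (1 / 2) (ε / (‖b - y‖ + 1)) * (‖b - y‖ + 1) ≤ ε :=
    (le_div_iff₀ hpos).1 (min_le_right _ _)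
  generalize min (1 / 2) (ε / (‖b - y‖ + 1)) = t at ht ht1 ht2
  have hint : y + t • (b - y) ∈ interior A := by
    have := hA.combo_self_interior_mem_interior (hKA hy) hb (sub_nonneg.2 ht1.le) ht
      (sub_add_cancel 1 t)
    convert this using 1
    module
  refine ⟨t, ht, ht1, h _ (interior_subset hint) ?_, hint⟩
  rw [add_sub_cancel_left, norm_smul, Real.norm_eq_abs, abs_of_pos ht]
  nlinarith

lemma isOpen_inter_interior {V : Type*} [NormedAddCommGroup V] {A K : Set V}
    (hK : ∀ y ∈ K, ∃ ε > 0, ∀ z ∈ A, ‖z - y‖ ≤ ε → z ∈ K) : IsOpen (K ∩ interior A) := by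
  rw [isOpen_iff_mem_nhds]
  rintro y ⟨hy, hyA⟩
  obtain ⟨ε, hε, h⟩ := hK y hy
  filter_upwards [isOpen_interior.mem_nhds hyA, Metric.closedBall_mem_nhds y hε] with z hz hzy
  exact ⟨h z (interior_subset hz) (by simpa [dist_eq_norm] using hzy), hz⟩

/-- A strict bound `f < s` on `K ∩ int A` extends to the relatively open set `K`, provided that
`f` exceeds `s` at some interior point of `A`. -/
lemma lt_of_lt_on_interior {A K : Set V} (hA : Convex ℝ A) (hKA : K ⊆ A)
    (hK : ∀ y ∈ K, ∃ ε > 0, ∀ z ∈ A, ‖z - y‖ ≤ ε → z ∈ K)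
    {f : V →L[ℝ] ℝ} {s : ℝ} (hf : ∀ y ∈ K ∩ interior A, f y < s)
    {b : V} (hb : b ∈ interior A) (hfb : s < f b) {y : V} (hy : y ∈ K) : f y < s := by
  by_contra! hs
  obtain ⟨t, ht, ht1, hz⟩ := exists_segment_mem_interior hA hKA hK hy hb
  have := hf _ hz
  simp only [map_add, map_smul, map_sub, smul_eq_mul] at this
  nlinarith

/-- Two disjoint convex relatively open subsets of a convex set `A` with non-empty interior are
strictly separated by a closed hyperplane. -/
lemma exists_separation {A Km Kp : Set V} (hA : Convex ℝ A) (hAi : (interior A).Nonempty)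
    (hKmA : Km ⊆ A) (hKpA : Kp ⊆ A) (hKmne : Km.Nonempty) (hKpne : Kp.Nonempty)
    (hKmconv : Convex ℝ Km) (hKpconv : Convex ℝ Kp) (hdisj : Disjoint Km Kp)
    (hKm : ∀ y ∈ Km, ∃ ε > 0, ∀ z ∈ A, ‖z - y‖ ≤ ε → z ∈ Km)
    (hKp : ∀ y ∈ Kp, ∃ ε > 0, ∀ z ∈ A, ‖z - y‖ ≤ ε → z ∈ Kp) :
    ∃ (f : V →L[ℝ] ℝ) (s : ℝ), (∀ y ∈ Km, f y < s) ∧ ∀ y ∈ Kp, s < f y := by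
  obtain ⟨c, hc⟩ := hAi
  obtain ⟨m, hm⟩ := hKmne
  obtain ⟨p, hp⟩ := hKpne
  obtain ⟨_, -, -, hm'⟩ := exists_segment_mem_interior hA hKmA hKm hm hc
  obtain ⟨_, -, -, hp'⟩ := exists_segment_mem_interior hA hKpA hKp hp hc
  obtain ⟨f, s, hfm, hfp⟩ := geometric_hahn_banach_open_open
    (hKmconv.inter hA.interior) (isOpen_inter_interior hKm)
    (hKpconv.inter hA.interior) (isOpen_inter_interior hKp)
    (hdisj.mono Set.inter_subset_left Set.inter_subset_left)
  refine ⟨f, s, fun y hy => lt_of_lt_on_interior hA hKmA hKm hfm hp'.2 (hfp _ hp') hy,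
    fun y hy => ?_⟩
  have := lt_of_lt_on_interior (f := -f) (s := -s) hA hKpA hKp
    (fun z hz => by simpa using hfp z hz) hm'.2 (by simpa using hfm _ hm') hy
  simpa using this

lemma le_of_approx {K : Set V} {f : V →L[ℝ] ℝ} {s : ℝ} (hf : ∀ z ∈ K, f z < s) {y : V}
    (hy : ∀ ε > 0, ∃ z ∈ K, ‖z - y‖ ≤ ε) : f y ≤ s := by
  have hcl : y ∈ closure K := by
    rw [Metric.mem_closure_iff]
    intro ε hε
    obtain ⟨z, hz, hzy⟩ := hy (ε / 2) (half_pos hε)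
    exact ⟨z, hz, by rw [dist_comm, dist_eq_norm]; linarith⟩
  exact closure_minimal (fun z hz => (hf z hz).le) (isClosed_le f.continuous continuous_const) hcl

end Normed

/-- The separation statement in a real vector space whose norm is given as a bare function, so that
it can be applied to a subspace carrying a norm other than the inherited one. -/
lemma exists_partition_functional {V : Type*} [AddCommGroup V] [Module ℝ V] (n : V → ℝ)
    (hadd : ∀ y z, n (y + z) ≤ n y + n z) (hsmul : ∀ (a : ℝ) (y), n (a • y) = |a| * n y)
    (hzero : ∀ y, n y = 0 → y = 0) (hnonneg : ∀ y, 0 ≤ n y)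
    {A Km K0 Kp : Set V} (hA : Convex ℝ A) (hAi : ∃ ε > 0, ∀ z, n z ≤ ε → z ∈ A)
    (hKmA : Km ⊆ A) (hKpA : Kp ⊆ A) (hKmne : Km.Nonempty) (hKpne : Kp.Nonempty)
    (hKmconv : Convex ℝ Km) (hKpconv : Convex ℝ Kp) (hdisj : Disjoint Km Kp)
    (hKm : ∀ y ∈ Km, ∃ ε > 0, ∀ z ∈ A, n (z - y) ≤ ε → z ∈ Km)
    (hKp : ∀ y ∈ Kp, ∃ ε > 0, ∀ z ∈ A, n (z - y) ≤ ε → z ∈ Kp)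
    (happrox : ∀ y ∈ K0, ∀ ε > 0,
      (∃ z ∈ Km, n (z - y) ≤ ε) ∧ (∃ z ∈ Kp, n (z - y) ≤ ε)) :
    ∃ (f : V →ₗ[ℝ] ℝ) (C s : ℝ), (∀ y, |f y| ≤ C * n y) ∧
      (∀ y ∈ Km, f y < s) ∧ (∀ y ∈ K0, f y = s) ∧ ∀ y ∈ Kp, s < f y := by
  let _ : Norm V := ⟨n⟩
  have core : NormedSpace.Core ℝ V :=
    { norm_nonneg := hnonneg
      norm_smul := hsmul
      norm_triangle := hadd
      norm_eq_zero_iff := fun y => ⟨hzero y, fun h => by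
        subst h
        have h0 : n 0 = 0 := by simpa using hsmul 0 0
        exact h0⟩ }
  let _ : NormedAddCommGroup V := NormedAddCommGroup.ofCore core
  let _ : NormedSpace ℝ V := NormedSpace.ofCore core
  have hint : (interior A).Nonempty := by
    obtain ⟨ε, hε, h⟩ := hAi
    refine ⟨0, mem_interior_iff_mem_nhds.2 ?_⟩
    filter_upwards [Metric.closedBall_mem_nhds (0 : V) hε] with z hz
    exact h z (mem_closedBall_zero_iff.1 hz)
  obtain ⟨f, s, hfm, hfp⟩ :=
    exists_separation hA hint hKmA hKpA hKmne hKpne hKmconv hKpconv hdisj hKm hKp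
  refine ⟨f.toLinearMap, ‖f‖, s, fun y => f.le_opNorm y, hfm, fun y hy => ?_, hfp⟩
  refine le_antisymm (le_of_approx hfm fun ε hε => (happrox y hy ε hε).1) ?_
  have := le_of_approx (f := -f) (s := -s) (fun z hz => by simpa using hfp z hz)
    (fun ε hε => (happrox y hy ε hε).2)
  simpa using this

/-- Proposition (strong separation in A): under B2*, if `A = K₋ ∪ K₀ ∪ K₊` is a
partition into non-empty convex sets where `K₋, K₊` coincide with their interiors
relative to `A` in `(F, ‖·‖_F)` and every point of `K₀` is approximated by points of
`K₋` and of `K₊`, then there are a `‖·‖_F`-continuous linear functional `y'` on `F`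
and `s ∈ ℝ` with `K₋ = {y' < s} ∩ A`, `K₀ = {y' = s} ∩ A`, `K₊ = {y' > s} ∩ A`. -/
theorem stmt_11 {E : Type*} [NormedAddCommGroup E] [NormedSpace ℝ E]
    (B : Set E) (hBne : B.Nonempty) (hBconv : Convex ℝ B)
    -- B2
    (xstar : E) (hxstar : xstar ∈ B)
    (A : Set E) (hA : A = (fun b => -xstar + b) '' B)
    (F : Submodule ℝ E) (hF : F = Submodule.span ℝ A)
    (nF : E → ℝ)
    (hnF_add : ∀ y ∈ F, ∀ z ∈ F, nF (y + z) ≤ nF y + nF z)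
    (hnF_smul : ∀ a : ℝ, ∀ y ∈ F, nF (a • y) = |a| * nF y)
    (hnF_zero : ∀ y ∈ F, (nF y = 0 ↔ y = 0))
    (hnF_dom : ∀ y ∈ F, ‖y‖ ≤ nF y)
    -- B2*: 0 is an interior point of A in (F, ‖·‖_F)
    (hB2star : ∃ ε > 0, ∀ z ∈ F, nF z ≤ ε → z ∈ A)
    (Km K0 Kp : Set E)
    (hKmA : Km ⊆ A) (hK0A : K0 ⊆ A) (hKpA : Kp ⊆ A)
    (hKmne : Km.Nonempty) (hK0ne : K0.Nonempty) (hKpne : Kp.Nonempty)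
    (hKmconv : Convex ℝ Km) (hK0conv : Convex ℝ K0) (hKpconv : Convex ℝ Kp)
    (hdisj1 : Disjoint Km K0) (hdisj2 : Disjoint Km Kp) (hdisj3 : Disjoint K0 Kp)
    (hcover : A = Km ∪ K0 ∪ Kp)
    -- K₋ and K₊ equal their interiors relative to A in (F, ‖·‖_F)
    (hKmopen : ∀ y ∈ Km, ∃ ε > 0, ∀ z ∈ A, nF (z - y) ≤ ε → z ∈ Km)
    (hKpopen : ∀ y ∈ Kp, ∃ ε > 0, ∀ z ∈ A, nF (z - y) ≤ ε → z ∈ Kp)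
    -- points of K₀ are approximated by K₋ and K₊ in ‖·‖_F
    (happrox : ∀ y ∈ K0, ∀ ε > 0,
      (∃ z ∈ Km, nF (z - y) ≤ ε) ∧ (∃ z ∈ Kp, nF (z - y) ≤ ε)) :
    ∃ (y' : F →ₗ[ℝ] ℝ) (C s : ℝ),
      (∀ y : F, |y' y| ≤ C * nF y) ∧
      (∀ y : F, ((y : E) ∈ Km ↔ (y : E) ∈ A ∧ y' y < s)) ∧
      (∀ y : F, ((y : E) ∈ K0 ↔ (y : E) ∈ A ∧ y' y = s)) ∧
      (∀ y : F, ((y : E) ∈ Kp ↔ (y : E) ∈ A ∧ s < y' y)) := by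
  have hAF : A ⊆ F := hF ▸ Submodule.subset_span
  have hAconv : Convex ℝ A := hA ▸ hBconv.translate (-xstar)
  -- Non-emptiness, convexity and relative openness pass to the preimages in `F`,
  -- because every set involved lies in `A ⊆ F`.
  have hne : ∀ K : Set E, K ⊆ A → K.Nonempty → (F.subtype ⁻¹' K).Nonempty :=
    fun K hK ⟨x, hx⟩ => ⟨⟨x, hAF (hK hx)⟩, hx⟩
  obtain ⟨f, C, s, hC, hm, h0, hp⟩ := exists_partition_functional (V := F)
    (fun y => nF y)
    (A := F.subtype ⁻¹' A) (Km := F.subtype ⁻¹' Km) (K0 := F.subtype ⁻¹' K0)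
    (Kp := F.subtype ⁻¹' Kp)
    (fun y z => hnF_add y y.2 z z.2) (fun a y => hnF_smul a y y.2)
    (fun y hy => Subtype.ext ((hnF_zero y y.2).1 hy))
    (fun y => (norm_nonneg _).trans (hnF_dom y y.2))
    (hAconv.linear_preimage _)
    (by
      obtain ⟨ε, hε, h⟩ := hB2star
      exact ⟨ε, hε, fun z hz => h z z.2 hz⟩)
    (Set.preimage_mono hKmA) (Set.preimage_mono hKpA) (hne _ hKmA hKmne) (hne _ hKpA hKpne)
    (hKmconv.linear_preimage _) (hKpconv.linear_preimage _) (hdisj2.preimage _)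
    (fun y hy => by
      obtain ⟨ε, hε, h⟩ := hKmopen y hy
      exact ⟨ε, hε, fun z hz hzy => h z hz hzy⟩)
    (fun y hy => by
      obtain ⟨ε, hε, h⟩ := hKpopen y hy
      exact ⟨ε, hε, fun z hz hzy => h z hz hzy⟩)
    (fun y hy ε hε => by
      obtain ⟨⟨z, hz, hzy⟩, w, hw, hwy⟩ := happrox y hy ε hε
      exact ⟨⟨⟨z, hAF (hKmA hz)⟩, hz, hzy⟩, ⟨w, hAF (hKpA hw)⟩, hw, hwy⟩)
  have hcases : ∀ y : F, (y : E) ∈ A → (y : E) ∈ Km ∨ (y : E) ∈ K0 ∨ (y : E) ∈ Kp := by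
    intro y hy
    rw [hcover] at hy
    rcases hy with (h | h) | h
    exacts [Or.inl h, Or.inr (Or.inl h), Or.inr (Or.inr h)]
  refine ⟨f, C, s, hC, fun y => ⟨fun h => ⟨hKmA h, hm y h⟩, ?_⟩,
    fun y => ⟨fun h => ⟨hK0A h, h0 y h⟩, ?_⟩, fun y => ⟨fun h => ⟨hKpA h, hp y h⟩, ?_⟩⟩
  · rintro ⟨hyA, hs⟩
    rcases hcases y hyA with h | h | h
    exacts [h, absurd (h0 y h) hs.ne, absurd (hp y h) hs.not_gt]
  · rintro ⟨hyA, hs⟩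
    rcases hcases y hyA with h | h | h
    exacts [absurd hs (hm y h).ne, h, absurd hs (hp y h).ne']
  · rintro ⟨hyA, hs⟩
    rcases hcases y hyA with h | h | h
    exacts [absurd (hm y h) hs.not_gt, absurd (h0 y h) hs.ne', h]
end

section
/- Let (E, ‖·‖_E) be a normed space, B ⊆ E non-empty and convex, H := span(B), and assume B1, B2*, G1, and G2. Then for every r ∈ I there exists a linear functional z' : H → ℝ, continuous with respect to ‖·‖_H, such that {x ∈ B : Γ(x) < r} = {x ∈ B : z'(x) < 0}, {x ∈ B : Γ(x) = r} = {x ∈ B : z'(x) = 0}, and {x ∈ B : Γ(x) > r} = {x ∈ B : z'(x) > 0}. If in addition B3 and G1* are satisfied, then z' can be chosen continuous with respect to ‖·‖_E. -/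
/-!
The sets `{Γ < r}` and `{Γ > r}` are convex: if `x, y` satisfy `Γ x ≤ Γ y < r` and some `z` of the
segment `[x, y]` had `Γ z ≥ r`, the intermediate value theorem on `[x, z]` would give a point `w`
with `Γ w = Γ y`, and convexity of that level set would force `Γ z = Γ y` (`convex_sublevel`).

Transport everything to `F` by `y ↦ x⋆ + y`. As `A` is convex with non-empty interior, its interior
is dense in it, so the traces of `{Γ < r}` and `{Γ > r}` on the interior of `A` are non-empty, open,
convex and disjoint. The Hahn-Banach theorem separates them strictly by a continuous functional `f`
and a constant `c`; by density `f ≤ c` on `{Γ < r}` and `f ≥ c` on `{Γ > r}`, and by G2 both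
inequalities hold on `{Γ = r}`. Equality `f x = c` is impossible when `Γ x < r`: moving slightly from
`x` towards a point where `f > c` keeps `Γ < r` but makes `f > c` (`strict_of_le`). The functional
on `H` is then `z' x = f (x - φ x • x⋆) - c * φ x`.

For `‖·‖_E`-continuity, fix `u ∈ B` with `z' u < 0`. If `x ∈ B` and `z' x > 0`, the zero of `z'` on
the segment `[u, x]` lies on `{Γ = r}`, hence stays away from `u` by `‖·‖_E`-continuity of `Γ`; this
bounds `z' x` by a multiple of `‖x‖` (`bound_of_continuous`), where `‖x‖` is bounded below on `B`
because `φ = 1` there. By symmetry `|z'| ≤ C ‖·‖` on `cone(B)`, and B3 extends the bound to `H`.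
-/

/-! ### Separation of the level sets in a seminormed space -/

section Separation

variable {X : Type*} [SeminormedAddCommGroup X] [NormedSpace ℝ X]

/-- A continuous function on a convex set with convex level sets is quasiconvex (strict sublevels).
Applied to `-g` this also covers strict superlevel sets. -/
lemma convex_sublevel {A : Set X} (hA : Convex ℝ A) {g : X → ℝ} (hg : ContinuousOn g A)
    (hlvl : ∀ s, Convex ℝ {x ∈ A | g x = s}) (r : ℝ) : Convex ℝ {x ∈ A | g x < r} := by
  have key : ∀ x ∈ A, ∀ y ∈ A, g x ≤ g y → g y < r → ∀ z ∈ segment ℝ x y, g z < r := by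
    intro x hx y hy hxy hyr z hz
    by_contra! hzr
    have hzA : z ∈ A := hA.segment_subset hx hy hz
    have hsub := hA.segment_subset hx hzA
    obtain ⟨w, hw, hwy⟩ := (convex_segment (𝕜 := ℝ) x z).isPreconnected.intermediate_value
      (left_mem_segment ℝ x z) (right_mem_segment ℝ x z) (hg.mono hsub)
      (show g y ∈ Set.Icc (g x) (g z) from ⟨hxy, by linarith⟩)
    have hzw : z ∈ segment ℝ w y := by
      rw [mem_segment_iff_wbtw] at hz hw ⊢
      exact hz.trans_left_right hw
    have := (hlvl (g y)).segment_subset ⟨hsub hw, hwy⟩ ⟨hy, rfl⟩ hzw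
    linarith [this.2]
  rw [convex_iff_segment_subset]
  rintro x ⟨hx, hxr⟩ y ⟨hy, hyr⟩ z hz
  refine ⟨hA.segment_subset hx hy hz, ?_⟩
  rcases le_total (g x) (g y) with h | h
  · exact key x hx y hy h hyr z hz
  · exact key y hy x hx h hxr z (segment_symm ℝ x y ▸ hz)

/-- A weak separation inequality is strict as soon as `f` exceeds `c` somewhere on `A`. -/
lemma strict_of_le {A : Set X} (hA : Convex ℝ A) {g : X → ℝ} (hg : ContinuousOn g A)
    {r c : ℝ} (f : X →ₗ[ℝ] ℝ) (hf : ∀ x ∈ A, g x < r → f x ≤ c) {v : X} (hv : v ∈ A)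
    (hfv : c < f v) : ∀ x ∈ A, g x < r → f x < c := by
  intro x hx hxr
  refine lt_of_le_of_ne (hf x hx hxr) fun hxc => ?_
  have hseg : ∀ t ∈ Set.Ioo (0 : ℝ) 1, x + t • (v - x) ∈ A := fun t ht =>
    hA.add_smul_sub_mem hx hv ⟨ht.1.le, ht.2.le⟩
  have hcont : Filter.Tendsto (fun t : ℝ => x + t • (v - x)) (nhdsWithin 0 (Set.Ioo 0 1))
      (nhdsWithin x A) := by
    refine tendsto_nhdsWithin_iff.2 ⟨?_, ?_⟩
    · have : Continuous (fun t : ℝ => x + t • (v - x)) := by fun_prop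
      simpa using (this.tendsto 0).mono_left nhdsWithin_le_nhds
    · filter_upwards [self_mem_nhdsWithin] with t ht using hseg t ht
  have hev := ((hg x hx).tendsto.comp hcont).eventually (gt_mem_nhds hxr)
  have : (nhdsWithin (0 : ℝ) (Set.Ioo 0 1)).NeBot := by
    rw [← mem_closure_iff_nhdsWithin_neBot, closure_Ioo zero_ne_one]
    exact ⟨le_rfl, zero_le_one⟩
  obtain ⟨t, htr, ht⟩ := (hev.and self_mem_nhdsWithin).exists
  have h1 := hf _ (hseg t ht) htr
  have h2 : 0 < t * (f v - f x) := mul_pos ht.1 (by linarith)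
  simp only [map_add, map_smul, map_sub, smul_eq_mul] at h1
  linarith

/-- Level-set identification on a convex set with non-empty interior, in a seminormed space. -/
lemma exists_separating {A : Set X} (hA : Convex ℝ A) (hint : (interior A).Nonempty)
    {g : X → ℝ} (hg : ContinuousOn g A) (hlvl : ∀ s, Convex ℝ {x ∈ A | g x = s}) {r : ℝ}
    (hr : ∀ x ∈ A, g x = r → x ∈ closure {y ∈ A | g y < r} ∧ x ∈ closure {y ∈ A | r < g y})
    {u v : X} (hu : u ∈ A) (hur : g u < r) (hv : v ∈ A) (hvr : r < g v) :
    ∃ (f : X →L[ℝ] ℝ) (c : ℝ), ∀ x ∈ A,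
      (g x < r → f x < c) ∧ (g x = r → f x = c) ∧ (r < g x → c < f x) := by
  have hU := convex_sublevel hA hg hlvl r
  have hV : Convex ℝ {x ∈ A | r < g x} := by
    have := convex_sublevel hA hg.neg (fun s => by
      have := hlvl (-s)
      simpa [neg_eq_iff_eq_neg] using this) (-r)
    simpa using this
  have hopen : ∀ S : Set ℝ, IsOpen S → IsOpen (interior A ∩ g ⁻¹' S) := fun S hS =>
    (hg.mono interior_subset).isOpen_inter_preimage isOpen_interior hS
  have hdense : ∀ S : Set ℝ, IsOpen S → ∀ x ∈ A, g x ∈ S → x ∈ closure (interior A ∩ g ⁻¹' S) := by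
    intro S hS x hx hxS
    have hxc : x ∈ closure (interior A) :=
      (hA.closure_interior_eq_closure_of_nonempty_interior hint).symm ▸ subset_closure hx
    have := mem_closure_iff_nhdsWithin_neBot.1 hxc
    have hev := ((hg x hx).mono interior_subset).tendsto.eventually (hS.mem_nhds hxS)
    rw [mem_closure_iff_frequently]
    have hboth : ∀ᶠ y in nhdsWithin x (interior A), y ∈ interior A ∩ g ⁻¹' S :=
      Filter.Eventually.and self_mem_nhdsWithin hev
    exact hboth.frequently.filter_mono nhdsWithin_le_nhds
  have hcU : Convex ℝ (interior A ∩ g ⁻¹' Set.Iio r) := by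
    have heq : interior A ∩ g ⁻¹' Set.Iio r = interior A ∩ {x ∈ A | g x < r} :=
      Set.ext fun x =>
        ⟨fun h => ⟨h.1, interior_subset h.1, h.2⟩, fun h => ⟨h.1, h.2.2⟩⟩
    exact heq ▸ hA.interior.inter hU
  have hcV : Convex ℝ (interior A ∩ g ⁻¹' Set.Ioi r) := by
    have heq : interior A ∩ g ⁻¹' Set.Ioi r = interior A ∩ {x ∈ A | r < g x} :=
      Set.ext fun x =>
        ⟨fun h => ⟨h.1, interior_subset h.1, h.2⟩, fun h => ⟨h.1, h.2.2⟩⟩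
    exact heq ▸ hA.interior.inter hV
  obtain ⟨f, c, hfU, hfV⟩ := geometric_hahn_banach_open_open hcU (hopen _ isOpen_Iio) hcV
    (hopen _ isOpen_Ioi) (Set.disjoint_left.2 fun x h h' =>
      lt_asymm (show g x < r from h.2) (show r < g x from h'.2))
  have hleU : ∀ x ∈ A, g x < r → f x ≤ c := fun x hx hxr =>
    closure_minimal (fun y hy => (hfU y hy).le) (isClosed_le f.continuous continuous_const)
      (hdense _ isOpen_Iio x hx hxr)
  have hleV : ∀ x ∈ A, r < g x → c ≤ f x := fun x hx hxr =>
    closure_minimal (fun y hy => (hfV y hy).le) (isClosed_le continuous_const f.continuous)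
      (hdense _ isOpen_Ioi x hx hxr)
  obtain ⟨u₀, hu₀⟩ := closure_nonempty_iff.1 ⟨u, hdense _ isOpen_Iio u hu hur⟩
  obtain ⟨v₀, hv₀⟩ := closure_nonempty_iff.1 ⟨v, hdense _ isOpen_Ioi v hv hvr⟩
  refine ⟨f, c, fun x hx => ⟨?_, fun hxr => le_antisymm ?_ ?_, fun hxr => ?_⟩⟩
  · exact strict_of_le hA hg f.toLinearMap hleU (interior_subset hv₀.1) (hfV _ hv₀) x hx
  · exact closure_minimal (fun y hy => hleU y hy.1 hy.2)
      (isClosed_le f.continuous continuous_const) (hr x hx hxr).1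
  · exact closure_minimal (fun y hy => hleV y hy.1 hy.2)
      (isClosed_le continuous_const f.continuous) (hr x hx hxr).2
  · have := strict_of_le (r := -r) (c := -c) hA hg.neg (-f.toLinearMap)
      (fun y hy hyr => by
        have := hleV y hy (by simpa using hyr)
        simpa using this)
      (interior_subset hu₀.1) (by simpa using hfU _ hu₀) x hx (by simpa using hxr)
    simpa using this

end Separation

/-- Version of `exists_separating` for a seminorm `p` on a bare vector space; it is what applies to
`F`, whose norm differs from the one inherited from `E`. -/
lemma exists_separating_seminorm {X : Type*} [AddCommGroup X] [Module ℝ X] (p : Seminorm ℝ X)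
    {A : Set X} (hA : Convex ℝ A) (hint : ∃ ε > 0, ∀ z, p z ≤ ε → z ∈ A)
    {g : X → ℝ}
    (hg : ∀ x ∈ A, ∀ ε > 0, ∃ δ > 0, ∀ y ∈ A, p (y - x) < δ → |g y - g x| < ε)
    (hlvl : ∀ s, Convex ℝ {x ∈ A | g x = s}) {r : ℝ}
    (hr : ∀ ε > 0, ∀ x ∈ A, g x = r →
      ∃ a ∈ A, ∃ b ∈ A, g a < r ∧ r < g b ∧ p (x - a) ≤ ε ∧ p (x - b) ≤ ε)
    {u v : X} (hu : u ∈ A) (hur : g u < r) (hv : v ∈ A) (hvr : r < g v) :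
    ∃ (f : X →ₗ[ℝ] ℝ) (c C : ℝ), (∀ x, |f x| ≤ C * p x) ∧ ∀ x ∈ A,
      (g x < r → f x < c) ∧ (g x = r → f x = c) ∧ (r < g x → c < f x) := by
  let : SeminormedAddCommGroup X := p.toAddGroupSeminorm.toSeminormedAddCommGroup
  let : NormedSpace ℝ X := { norm_smul_le := fun a x => (map_smul_eq_mul p a x).le }
  have hnorm : ∀ x : X, ‖x‖ = p x := fun _ => rfl
  have hdist : ∀ x y : X, dist x y = p (x - y) := fun x y => dist_eq_norm x y
  obtain ⟨ε, hε, hball⟩ := hint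
  have hint' : (interior A).Nonempty := by
    refine ⟨0, mem_interior_iff_mem_nhds.2 (Metric.mem_nhds_iff.2 ⟨ε, hε, fun z hz => ?_⟩)⟩
    exact hball z (by rw [← hnorm]; exact (mem_ball_zero_iff.1 hz).le)
  have hg' : ContinuousOn g A := by
    rw [Metric.continuousOn_iff]
    intro x hx ε hε
    obtain ⟨δ, hδ, h⟩ := hg x hx ε hε
    exact ⟨δ, hδ, fun y hy hyx => h y hy (by rw [← hdist]; exact hyx)⟩
  obtain ⟨f, c, hf⟩ := exists_separating hA hint' hg' hlvl (r := r) (fun x hx hxr => by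
    constructor
    · rw [Metric.mem_closure_iff]
      intro ε hε
      obtain ⟨a, ha, b, hb, har, hbr, hxa, hxb⟩ := hr (ε / 2) (half_pos hε) x hx hxr
      exact ⟨a, ⟨ha, har⟩, by rw [hdist]; linarith⟩
    · rw [Metric.mem_closure_iff]
      intro ε hε
      obtain ⟨a, ha, b, hb, har, hbr, hxa, hxb⟩ := hr (ε / 2) (half_pos hε) x hx hxr
      exact ⟨b, ⟨hb, hbr⟩, by rw [hdist]; linarith⟩) hu hur hv hvr
  exact ⟨f.toLinearMap, c, ‖f‖, fun x => f.le_opNorm x, hf⟩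

/-! ### Norm bound on `B` -/

/-- If `z u < 0` and `z` has no zero on `B` close to `u`, then `z` is bounded above on `B` by a
multiple of the norm: for `x ∈ B` with `z x > 0`, the zero of `z` on `[u, x]` must be at distance at
least `δ` from `u`. -/
lemma bound_of_continuous {E : Type*} [NormedAddCommGroup E] [NormedSpace ℝ E] {B : Set E}
    (hB : Convex ℝ B) {H : Submodule ℝ E} (φ : E →L[ℝ] ℝ) (hφ : ∀ x ∈ B, φ x = 1)
    (z : H →ₗ[ℝ] ℝ) {u : H} (hu : (u : E) ∈ B) (hzu : z u < 0)
    (hnear : ∃ δ > 0, ∀ y : H, (y : E) ∈ B → ‖(y : E) - u‖ < δ → z y ≠ 0) :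
    ∃ C : ℝ, 0 ≤ C ∧ ∀ x : H, (x : E) ∈ B → z x ≤ C * ‖(x : E)‖ := by
  obtain ⟨δ, hδ, hnear⟩ := hnear
  refine ⟨(-z u / δ) * (1 + ‖(u : E)‖ * ‖φ‖), by
    have : 0 ≤ -z u / δ := div_nonneg (by linarith) hδ.le
    positivity, fun x hx => ?_⟩
  have hq : 0 < -z u / δ := div_pos (by linarith) hδ
  rcases le_or_gt (z x) 0 with hx0 | hx0
  · exact hx0.trans (by positivity)
  have hφx : 1 ≤ ‖φ‖ * ‖(x : E)‖ := by
    have := φ.le_opNorm (x : E)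
    rwa [hφ _ hx, norm_one] at this
  have hd : 0 < z x - z u := by linarith
  -- the parameter of the zero of `z` on the segment from `u` to `x`
  set t : ℝ := -z u / (z x - z u) with ht
  have ht0 : 0 < t := div_pos (by linarith) hd
  have ht1 : t ≤ 1 := by rw [ht, div_le_one hd]; linarith
  have htd : t * (z x - z u) = -z u := div_mul_cancel₀ _ hd.ne'
  have hy : ((u + t • (x - u) : H) : E) ∈ B := by
    simpa using hB.add_smul_sub_mem hu hx ⟨ht0.le, ht1⟩
  have hfar : δ ≤ ‖((u + t • (x - u) : H) : E) - u‖ := by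
    by_contra! hlt
    refine hnear _ hy hlt ?_
    simp only [map_add, map_smul, map_sub, smul_eq_mul]
    linarith
  have hle : δ ≤ t * (‖(x : E)‖ + ‖(u : E)‖) := by
    refine hfar.trans ?_
    have : ((u + t • (x - u) : H) : E) - u = t • ((x : E) - u) := by simp
    rw [this, norm_smul, Real.norm_of_nonneg ht0.le]
    exact mul_le_mul_of_nonneg_left (norm_sub_le _ _) ht0.le
  have h1 : δ * (z x - z u) ≤ -z u * (‖(x : E)‖ + ‖(u : E)‖) := by
    calc δ * (z x - z u) ≤ t * (‖(x : E)‖ + ‖(u : E)‖) * (z x - z u) :=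
          mul_le_mul_of_nonneg_right hle hd.le
      _ = (t * (z x - z u)) * (‖(x : E)‖ + ‖(u : E)‖) := by ring
      _ = _ := by rw [htd]
  have h2 : z x - z u ≤ (-z u / δ) * (‖(x : E)‖ + ‖(u : E)‖) := by
    rw [div_mul_eq_mul_div, le_div_iff₀ hδ]
    linarith
  have h3 : ‖(x : E)‖ + ‖(u : E)‖ ≤ (1 + ‖(u : E)‖ * ‖φ‖) * ‖(x : E)‖ := by
    have := mul_le_mul_of_nonneg_left hφx (norm_nonneg (u : E))
    linarith
  have h4 := mul_le_mul_of_nonneg_left h3 hq.le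
  rw [← mul_assoc] at h4
  linarith

/-! ### Level-set identification in `H` -/

/-- Theorem (level-set identification in H): under B1, B2*, G1 and G2, for every
`r` in the interior of `Γ(B)` there is a `‖·‖_H`-continuous linear functional
`z' : H → ℝ` whose sign separates the level sets `{Γ < r}`, `{Γ = r}`, `{Γ > r}`
inside `B`; if in addition B3 and G1* hold, `z'` can be chosen `‖·‖_E`-continuous. -/
theorem stmt_12 {E : Type*} [NormedAddCommGroup E] [NormedSpace ℝ E]
    (B : Set E) (hBne : B.Nonempty) (hBconv : Convex ℝ B)
    (H : Submodule ℝ E) (hH : H = Submodule.span ℝ B)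
    -- B1
    (φ : E →L[ℝ] ℝ) (hφ : ∀ x ∈ B, φ x = 1)
    -- B2
    (xstar : E) (hxstar : xstar ∈ B)
    (A : Set E) (hA : A = (fun b => -xstar + b) '' B)
    (F : Submodule ℝ E) (hF : F = Submodule.span ℝ A)
    (nF : E → ℝ)
    (hnF_add : ∀ y ∈ F, ∀ z ∈ F, nF (y + z) ≤ nF y + nF z)
    (hnF_smul : ∀ a : ℝ, ∀ y ∈ F, nF (a • y) = |a| * nF y)
    (hnF_zero : ∀ y ∈ F, (nF y = 0 ↔ y = 0))
    (hnF_dom : ∀ y ∈ F, ‖y‖ ≤ nF y)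
    -- B2*: 0 is an interior point of A in (F, ‖·‖_F)
    (hB2star : ∃ ε > 0, ∀ z ∈ F, nF z ≤ ε → z ∈ A)
    (Γ : E → ℝ)
    -- G1: ‖·‖_F-continuity and convex level sets
    (hG1cont : ∀ x ∈ B, ∀ ε > 0, ∃ δ > 0, ∀ y ∈ B, nF (y - x) < δ → |Γ y - Γ x| < ε)
    (hG1lvl : ∀ r ∈ Γ '' B, Convex ℝ {x ∈ B | Γ x = r})
    -- G2: locally non-constant
    (hG2 : ∀ r ∈ interior (Γ '' B), ∀ ε > 0, ∀ x ∈ B, Γ x = r →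
      ∃ xm ∈ B, ∃ xp ∈ B, Γ xm < r ∧ r < Γ xp ∧ nF (x - xm) ≤ ε ∧ nF (x - xp) ≤ ε) :
    (∀ r ∈ interior (Γ '' B), ∃ z' : H →ₗ[ℝ] ℝ,
      (∃ C : ℝ, ∀ x : H, ∀ y ∈ F, ∀ α : ℝ, (x : E) = y + α • xstar →
        |z' x| ≤ C * (nF y + ‖α • xstar‖)) ∧
      (∀ x : H, (x : E) ∈ B →
        (Γ (x : E) < r ↔ z' x < 0) ∧ (Γ (x : E) = r ↔ z' x = 0) ∧
          (r < Γ (x : E) ↔ 0 < z' x))) ∧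
    -- moreover: under B3 and G1*, z' can be chosen ‖·‖_E-continuous
    ((∃ K : ℝ, 0 < K ∧ ∀ z ∈ H,
        ∃ zp ∈ {w : E | ∃ a : ℝ, 0 ≤ a ∧ ∃ x ∈ B, w = a • x},
        ∃ zm ∈ {w : E | ∃ a : ℝ, 0 ≤ a ∧ ∃ x ∈ B, w = a • x},
        z = zp - zm ∧ ‖zm‖ + ‖zp‖ ≤ K * ‖z‖) →
      ContinuousOn Γ B →
      ∀ r ∈ interior (Γ '' B), ∃ z' : H →ₗ[ℝ] ℝ,
        Continuous ⇑z' ∧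
        (∀ x : H, (x : E) ∈ B →
          (Γ (x : E) < r ↔ z' x < 0) ∧ (Γ (x : E) = r ↔ z' x = 0) ∧
            (r < Γ (x : E) ↔ 0 < z' x))) := by
  have hBH : B ⊆ H := hH ▸ Submodule.subset_span
  -- points of `B` on both sides of an interior value `r`
  have hsides : ∀ r ∈ interior (Γ '' B), (∃ u ∈ B, Γ u < r) ∧ ∃ v ∈ B, r < Γ v := by
    intro r hr
    obtain ⟨ε, hε, hb⟩ := Metric.mem_nhds_iff.1 (mem_interior_iff_mem_nhds.1 hr)
    have hm : r - ε / 2 ∈ Metric.ball r ε := by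
      rw [Metric.mem_ball, Real.dist_eq, abs_lt]; constructor <;> linarith
    have hp : r + ε / 2 ∈ Metric.ball r ε := by
      rw [Metric.mem_ball, Real.dist_eq, abs_lt]; constructor <;> linarith
    obtain ⟨u, hu, hur⟩ := hb hm
    obtain ⟨v, hv, hvr⟩ := hb hp
    exact ⟨⟨u, hu, by linarith⟩, ⟨v, hv, by linarith⟩⟩
  have main : ∀ r ∈ interior (Γ '' B), ∃ z' : H →ₗ[ℝ] ℝ,
      (∃ C : ℝ, ∀ x : H, ∀ y ∈ F, ∀ α : ℝ, (x : E) = y + α • xstar →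
        |z' x| ≤ C * (nF y + ‖α • xstar‖)) ∧
      (∀ x : H, (x : E) ∈ B →
        (Γ (x : E) < r ↔ z' x < 0) ∧ (Γ (x : E) = r ↔ z' x = 0) ∧
          (r < Γ (x : E) ↔ 0 < z' x)) := by
    intro r hr
    obtain ⟨⟨u, hu, hur⟩, ⟨v, hv, hvr⟩⟩ := hsides r hr
    have hmemA : ∀ y, y ∈ A ↔ xstar + y ∈ B := by
      intro y
      rw [hA]
      constructor
      · rintro ⟨b, hb, rfl⟩
        simpa using hb
      · exact fun h => ⟨_, h, by simp⟩
    have hAF : A ⊆ F := hF ▸ Submodule.subset_span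
    have hBF : ∀ x ∈ B, x - xstar ∈ F := fun x hx => hAF ((hmemA _).2 (by simpa using hx))
    have hφF : ∀ y ∈ F, φ y = 0 := by
      intro y hy
      have hle : F ≤ LinearMap.ker φ.toLinearMap := by
        rw [hF, Submodule.span_le]
        intro a ha
        have := hφ _ ((hmemA a).1 ha)
        rw [map_add, hφ _ hxstar] at this
        simpa using this
      simpa using hle hy
    -- the projection of `H` onto `F` along `xstar`
    have hproj : ∀ x : H, (x : E) - φ x • xstar ∈ F := by
      have hle : H ≤ F.comap (LinearMap.id - φ.toLinearMap.smulRight xstar) := by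
        rw [hH, Submodule.span_le]
        intro x hx
        simpa [hφ x hx] using hBF x hx
      intro x
      simpa using hle x.2
    let P : H →ₗ[ℝ] F := LinearMap.codRestrict F
      ((LinearMap.id - φ.toLinearMap.smulRight xstar).comp H.subtype)
      (fun x => by simpa using hproj x)
    have hP : ∀ x : H, (P x : E) = (x : E) - φ x • xstar := fun x => by simp [P]
    let p : Seminorm ℝ F := Seminorm.of (fun y => nF y) (fun y z => hnF_add y y.2 z z.2)
      (fun a y => by simpa using hnF_smul a y y.2)
    have hp : ∀ y : F, p y = nF y := fun _ => rfl
    have htrans : ∀ S : Set E, Convex ℝ S → Convex ℝ {y : F | xstar + (y : E) ∈ S} := by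
      intro S hS
      exact (hS.translate_preimage_right xstar).linear_preimage F.subtype
    have hlvl : ∀ s, Convex ℝ {x ∈ B | Γ x = s} := by
      intro s
      by_cases hs : s ∈ Γ '' B
      · exact hG1lvl s hs
      · convert convex_empty
        ext x
        simp only [Set.mem_ofPred_eq, Set.mem_empty_iff_false, iff_false]
        exact fun h => hs ⟨x, h.1, h.2⟩
    obtain ⟨f, c, C, hfC, hf⟩ := exists_separating_seminorm p (A := {y : F | xstar + (y : E) ∈ B})
      (g := fun y => Γ (xstar + y)) (r := r) (u := ⟨u - xstar, hBF u hu⟩)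
      (v := ⟨v - xstar, hBF v hv⟩) (htrans B hBconv)
      (by
        obtain ⟨ε, hε, h⟩ := hB2star
        exact ⟨ε, hε, fun z hz => (hmemA _).1 (h z z.2 hz)⟩)
      (by
        intro x hx ε hε
        obtain ⟨δ, hδ, h⟩ := hG1cont _ hx ε hε
        refine ⟨δ, hδ, fun y hy hyx => h _ hy ?_⟩
        rw [add_sub_add_left_eq_sub]
        exact hyx)
      (fun s => htrans _ (hlvl s))
      (by
        intro ε hε x hx hxr
        obtain ⟨a, ha, b, hb, har, hbr, hxa, hxb⟩ := hG2 r hr ε hε _ hx hxr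
        refine ⟨⟨a - xstar, hBF a ha⟩, by simpa using ha, ⟨b - xstar, hBF b hb⟩,
          by simpa using hb, by simpa using har, by simpa using hbr, ?_, ?_⟩
        · rw [hp]
          convert hxa using 2
          push_cast
          abel
        · rw [hp]
          convert hxb using 2
          push_cast
          abel)
      (by simpa using hu) (by simpa using hur) (by simpa using hv) (by simpa using hvr)
    have hxs : 0 < ‖xstar‖ := by
      rw [norm_pos_iff]
      rintro rfl
      simpa using hφ _ hxstar
    refine ⟨f.comp P - c • (φ.toLinearMap.comp H.subtype), ⟨max C (|c| / ‖xstar‖), ?_⟩, ?_⟩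
    · intro x y hy α hxy
      have hφx : φ x = α := by rw [hxy, map_add, hφF y hy, map_smul, hφ _ hxstar]; simp
      have hPx : P x = ⟨y, hy⟩ := by
        apply Subtype.ext
        rw [hP, hφx, hxy]
        simp
      have hval : (f.comp P - c • (φ.toLinearMap.comp H.subtype)) x = f ⟨y, hy⟩ - c * α := by
        simp [hPx, hφx]
      have hny : 0 ≤ nF y := (norm_nonneg y).trans (hnF_dom y hy)
      have h1 : |f ⟨y, hy⟩| ≤ max C (|c| / ‖xstar‖) * nF y :=
        (hfC ⟨y, hy⟩).trans (mul_le_mul_of_nonneg_right (le_max_left _ _) hny)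
      have h2 : |c * α| ≤ max C (|c| / ‖xstar‖) * ‖α • xstar‖ := by
        calc |c * α| = |c| / ‖xstar‖ * ‖α • xstar‖ := by
              rw [norm_smul, abs_mul, Real.norm_eq_abs]
              field_simp
          _ ≤ _ := mul_le_mul_of_nonneg_right (le_max_right _ _) (norm_nonneg _)
      rw [hval, mul_add]
      exact (abs_sub _ _).trans (add_le_add h1 h2)
    · intro x hx
      have hPx : xstar + (P x : E) = x := by rw [hP, hφ _ hx]; simp
      have hval : (f.comp P - c • (φ.toLinearMap.comp H.subtype)) x = f (P x) - c := by
        simp [hφ _ hx]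
      obtain ⟨h1, h2, h3⟩ := hf (P x) (by rw [Set.mem_ofPred_eq, hPx]; exact hx)
      simp only [hPx] at h1 h2 h3
      rw [hval]
      rcases lt_trichotomy (Γ (x : E)) r with h | h | h
      · have := h1 h
        exact ⟨iff_of_true h (by linarith), iff_of_false h.ne (by linarith),
          iff_of_false h.not_gt (by linarith)⟩
      · have := h2 h
        exact ⟨iff_of_false h.not_lt (by linarith), iff_of_true h (by linarith),
          iff_of_false h.not_gt (by linarith)⟩
      · have := h3 h
        exact ⟨iff_of_false h.not_gt (by linarith), iff_of_false h.ne' (by linarith),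
          iff_of_true h (by linarith)⟩
  refine ⟨main, ?_⟩
  rintro ⟨K, hK, hdec⟩ hcont r hr
  obtain ⟨z, -, hz⟩ := main r hr
  refine ⟨z, ?_, hz⟩
  obtain ⟨⟨u, hu, hur⟩, ⟨v, hv, hvr⟩⟩ := hsides r hr
  have hnear : ∀ w : H, (w : E) ∈ B → Γ w ≠ r →
      ∃ δ > 0, ∀ y : H, (y : E) ∈ B → ‖(y : E) - w‖ < δ → z y ≠ 0 := by
    intro w hw hwr
    obtain ⟨δ, hδ, h⟩ := Metric.continuousOn_iff.1 hcont w hw |Γ w - r|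
      (abs_pos.2 (sub_ne_zero.2 hwr))
    refine ⟨δ, hδ, fun y hy hyw h0 => ?_⟩
    have := h y hy (by rwa [dist_eq_norm])
    rw [Real.dist_eq, (hz y hy).2.1.2 h0, abs_sub_comm] at this
    exact lt_irrefl _ this
  obtain ⟨C₁, hC₁, hb₁⟩ := bound_of_continuous hBconv φ hφ z (u := ⟨u, hBH hu⟩) hu
    ((hz ⟨u, hBH hu⟩ hu).1.1 hur) (hnear _ hu hur.ne)
  obtain ⟨C₂, hC₂, hb₂⟩ := bound_of_continuous hBconv φ hφ (-z) (u := ⟨v, hBH hv⟩) hv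
    (by simpa using (hz ⟨v, hBH hv⟩ hv).2.2.1 hvr)
    (by simpa using hnear ⟨v, hBH hv⟩ hv hvr.ne')
  have hcone : ∀ w : H, (∃ a : ℝ, 0 ≤ a ∧ ∃ x ∈ B, (w : E) = a • x) →
      |z w| ≤ max C₁ C₂ * ‖(w : E)‖ := by
    rintro w ⟨a, ha, x, hx, hwx⟩
    have hw : w = a • (⟨x, hBH hx⟩ : H) := Subtype.ext hwx
    have h1 := hb₁ ⟨x, hBH hx⟩ hx
    have h2 := hb₂ ⟨x, hBH hx⟩ hx
    have h3 : |z ⟨x, hBH hx⟩| ≤ max C₁ C₂ * ‖x‖ := by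
      have e1 := mul_le_mul_of_nonneg_right (le_max_left C₁ C₂) (norm_nonneg x)
      have e2 := mul_le_mul_of_nonneg_right (le_max_right C₁ C₂) (norm_nonneg x)
      simp only [LinearMap.neg_apply] at h1 h2
      rw [abs_le]
      constructor <;> linarith
    rw [hwx, hw, map_smul, smul_eq_mul, abs_mul, norm_smul, Real.norm_eq_abs]
    have := mul_le_mul_of_nonneg_left h3 (abs_nonneg a)
    linarith
  refine (z.mkContinuous (max C₁ C₂ * K) fun x => ?_).continuous
  obtain ⟨zp, hzp, zm, hzm, hx, hle⟩ := hdec x x.2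
  have hmem : ∀ w, (∃ a : ℝ, 0 ≤ a ∧ ∃ x ∈ B, w = a • x) → w ∈ H := by
    rintro w ⟨a, -, x, hx, rfl⟩
    exact H.smul_mem a (hBH hx)
  have hx' : x = ⟨zp, hmem zp hzp⟩ - ⟨zm, hmem zm hzm⟩ := Subtype.ext hx
  have hCnn : 0 ≤ max C₁ C₂ := hC₁.trans (le_max_left _ _)
  have h1 := hcone ⟨zp, hmem zp hzp⟩ hzp
  have h2 := hcone ⟨zm, hmem zm hzm⟩ hzm
  have h3 := mul_le_mul_of_nonneg_left hle hCnn
  have h4 : |z x| ≤ |z ⟨zp, hmem zp hzp⟩| + |z ⟨zm, hmem zm hzm⟩| := by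
    rw [hx', map_sub]
    exact abs_sub _ _
  rw [Real.norm_eq_abs, Submodule.coe_norm x]
  simp only at h1 h2
  linarith
end

section
/- Let (E, ‖·‖_E) be a normed space, B ⊆ E non-empty and convex, H := span(B), and assume B1, B2*, and G1. Let r ∈ I and let z' : H → ℝ be a linear functional satisfying {x ∈ B : Γ(x) = r} = B ∩ ker(z'). Then z' ≠ 0 and ker(z') = span(ker(z') ∩ B) = span({x ∈ B : Γ(x) = r}). -/
/-!
Every `h` in `H` differs from `φ h • x` by an element of `F`, for any `x ∈ B`. Hence the kernel is
spanned by its points in `B` as soon as one of these points, `x₀`, is an algebraic interior point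
of `B` relative to `F`: if `z' h = 0`, then `y = h - φ h • x₀` lies in `F ∩ ker z'`, the point
`u = x₀ + t • y` is in `B ∩ ker z'` for small `t > 0`, and `h = φ h • x₀ + t⁻¹ • (u - x₀)`.

To find `x₀`, take points of `B` where `Γ < r` and `Γ > r`. The functional has opposite signs at
them: otherwise it has no zero on the segment joining them, whereas `Γ` takes the value `r` there
by the intermediate value theorem. So some `c ∈ B` has a sign opposite to that of `x⋆` (or `x⋆` is
itself in the kernel), and the zero on the segment from `x⋆` to `c` is different from `c`; it
inherits the interior property from `x⋆`.
-/

/-- A zero of `z` in `B` that is an algebraic interior point of `B` relative to `F`, obtained from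
such an interior point `p` by moving towards a point `c` with `z c` of opposite sign. -/
lemma exists_interior_zero {E : Type*} [AddCommGroup E] [Module ℝ E] {B : Set E}
    (hB : Convex ℝ B) {F : Submodule ℝ E} {z : E →ₗ[ℝ] ℝ} {p c : E}
    (hp : ∀ y ∈ F, ∃ t : ℝ, 0 < t ∧ p + t • y ∈ B) (hc : c ∈ B)
    (h : z p = 0 ∨ z p * z c < 0) :
    ∃ x ∈ B, z x = 0 ∧ ∀ y ∈ F, ∃ t : ℝ, 0 < t ∧ x + t • y ∈ B := by
  have hpB : p ∈ B := by
    obtain ⟨t, -, h⟩ := hp 0 F.zero_mem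
    simpa using h
  -- the zero divides the segment from `p` to `c` in the ratio `|z p| : |z c|`
  obtain ⟨s, hs0, hs1, hs⟩ : ∃ s : ℝ, 0 ≤ s ∧ s < 1 ∧ (1 - s) * z p + s * z c = 0 := by
    rcases h with h | h
    · exact ⟨0, le_rfl, one_pos, by simp [h]⟩
    · rcases mul_neg_iff.1 h with ⟨h1, h2⟩ | ⟨h1, h2⟩
      · have hd : 0 < z p - z c := by linarith
        refine ⟨z p / (z p - z c), by positivity, (div_lt_one hd).2 (by linarith), ?_⟩
        field_simp
        ring
      · have hd : 0 < z c - z p := by linarith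
        refine ⟨-z p / (z c - z p), div_nonneg (by linarith) hd.le,
          (div_lt_one hd).2 (by linarith), ?_⟩
        field_simp
        ring
  have h1s : 0 < 1 - s := by linarith
  refine ⟨(1 - s) • p + s • c, hB hpB hc h1s.le hs0 (by ring), by simpa using hs, ?_⟩
  intro y hy
  obtain ⟨t, ht, htB⟩ := hp y hy
  refine ⟨(1 - s) * t, by positivity, ?_⟩
  convert hB htB hc h1s.le hs0 (by ring) using 1
  module

/-- Lemma (kernel-is-determined): under B1, B2* and G1, any linear functional
`z' : H → ℝ` with `{Γ = r} = B ∩ ker z'` (for `r` in the interior of `Γ(B)`) is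
non-zero and its kernel equals `span (ker z' ∩ B) = span {Γ = r}`. -/
theorem stmt_13 {E : Type*} [NormedAddCommGroup E] [NormedSpace ℝ E]
    (B : Set E) (hBne : B.Nonempty) (hBconv : Convex ℝ B)
    (H : Submodule ℝ E) (hH : H = Submodule.span ℝ B)
    -- B1
    (φ : E →L[ℝ] ℝ) (hφ : ∀ x ∈ B, φ x = 1)
    -- B2
    (xstar : E) (hxstar : xstar ∈ B)
    (A : Set E) (hA : A = (fun b => -xstar + b) '' B)
    (F : Submodule ℝ E) (hF : F = Submodule.span ℝ A)
    (nF : E → ℝ)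
    (hnF_add : ∀ y ∈ F, ∀ z ∈ F, nF (y + z) ≤ nF y + nF z)
    (hnF_smul : ∀ a : ℝ, ∀ y ∈ F, nF (a • y) = |a| * nF y)
    (hnF_zero : ∀ y ∈ F, (nF y = 0 ↔ y = 0))
    (hnF_dom : ∀ y ∈ F, ‖y‖ ≤ nF y)
    -- B2*: 0 is an interior point of A in (F, ‖·‖_F)
    (hB2star : ∃ ε > 0, ∀ z ∈ F, nF z ≤ ε → z ∈ A)
    (Γ : E → ℝ)
    -- G1: ‖·‖_F-continuity and convex level sets
    (hG1cont : ∀ x ∈ B, ∀ ε > 0, ∃ δ > 0, ∀ y ∈ B, nF (y - x) < δ → |Γ y - Γ x| < ε)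
    (hG1lvl : ∀ r ∈ Γ '' B, Convex ℝ {x ∈ B | Γ x = r})
    (r : ℝ) (hr : r ∈ interior (Γ '' B))
    (z' : H →ₗ[ℝ] ℝ)
    -- {Γ = r} = B ∩ ker z'
    (hker : ∀ x : H, ((x : E) ∈ B ∧ Γ (x : E) = r) ↔ ((x : E) ∈ B ∧ z' x = 0)) :
    z' ≠ 0 ∧
    LinearMap.ker z' = Submodule.span ℝ {x : H | (x : E) ∈ B ∧ z' x = 0} ∧
    LinearMap.ker z' = Submodule.span ℝ {x : H | (x : E) ∈ B ∧ Γ (x : E) = r} := by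
  obtain ⟨z, hz⟩ := LinearMap.exists_extend z'
  have hzz : ∀ x : H, z' x = z x := fun x => by rw [← hz]; rfl
  have hBH : ∀ x ∈ B, x ∈ H := fun x hx => hH ▸ Submodule.subset_span hx
  have hkerB : ∀ x ∈ B, (Γ x = r ↔ z x = 0) := by
    intro x hx
    have := hker ⟨x, hBH x hx⟩
    rw [hzz] at this
    simpa [hx] using this
  have hF0 : ∀ x ∈ B, x - xstar ∈ F := by
    intro x hx
    rw [hF, hA]
    exact Submodule.subset_span ⟨x, hx, by simp only; abel⟩
  have hFB : ∀ x ∈ B, ∀ y ∈ B, y - x ∈ F := by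
    intro x hx y hy
    simpa using F.sub_mem (hF0 y hy) (hF0 x hx)
  have hFH : ∀ x ∈ B, ∀ h ∈ H, h - φ h • x ∈ F := by
    intro x hx h hh
    rw [hH] at hh
    induction hh using Submodule.span_induction with
    | mem y hy => simpa [hφ y hy] using hFB x hx y hy
    | zero => simp
    | add a b _ _ ha hb =>
      convert F.add_mem ha hb using 1
      rw [map_add]
      module
    | smul k a _ ha =>
      convert F.smul_mem k ha using 1
      rw [map_smul, smul_eq_mul]
      module
  have hint : ∀ y ∈ F, ∃ t : ℝ, 0 < t ∧ xstar + t • y ∈ B := by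
    intro y hy
    obtain ⟨ε, hε, hεA⟩ := hB2star
    have hN : 0 ≤ nF y := (norm_nonneg y).trans (hnF_dom y hy)
    have ht : 0 < ε / (nF y + 1) := by positivity
    refine ⟨ε / (nF y + 1), ht, ?_⟩
    have h := hεA _ (F.smul_mem (ε / (nF y + 1)) hy) (by
      rw [hnF_smul _ y hy, abs_of_pos ht, div_mul_eq_mul_div, div_le_iff₀ (by positivity)]
      nlinarith)
    rw [hA] at h
    obtain ⟨b, hb, hbe⟩ := h
    simp only at hbe
    rw [← hbe]
    simpa using hb
  obtain ⟨δ, hδ, hball⟩ := Metric.isOpen_iff.1 isOpen_interior r hr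
  have hmem : ∀ s : ℝ, |s - r| < δ → s ∈ Γ '' B := fun s hs =>
    interior_subset (hball (by simpa [Real.dist_eq] using hs))
  obtain ⟨a, haB, ha⟩ := hmem (r - δ / 2) (by
    rw [abs_lt]; constructor <;> linarith)
  obtain ⟨b, hbB, hb⟩ := hmem (r + δ / 2) (by
    rw [abs_lt]; constructor <;> linarith)
  have hza : z a ≠ 0 := fun h => by
    have := (hkerB a haB).2 h
    linarith
  have hzb : z b ≠ 0 := fun h => by
    have := (hkerB b hbB).2 h
    linarith
  have hseg : ∀ t ∈ Set.Icc (0 : ℝ) 1, a + t • (b - a) ∈ B := fun t ht =>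
    hBconv.add_smul_sub_mem haB hbB ht
  have hcont : ContinuousOn (fun t : ℝ => Γ (a + t • (b - a))) (Set.Icc 0 1) := by
    rw [Metric.continuousOn_iff]
    intro t ht ε hε
    obtain ⟨η, hη, hηB⟩ := hG1cont _ (hseg t ht) ε hε
    have hM : 0 ≤ nF (b - a) := (norm_nonneg _).trans (hnF_dom _ (hFB a haB b hbB))
    refine ⟨η / (nF (b - a) + 1), by positivity, fun s hs hst => ?_⟩
    refine hηB _ (hseg s hs) ?_
    have he : a + s • (b - a) - (a + t • (b - a)) = (s - t) • (b - a) := by module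
    rw [he, hnF_smul _ _ (hFB a haB b hbB)]
    rw [Real.dist_eq, lt_div_iff₀ (by positivity)] at hst
    nlinarith [abs_nonneg (s - t)]
  obtain ⟨t, ht, htr⟩ : r ∈ (fun t : ℝ => Γ (a + t • (b - a))) '' Set.Icc 0 1 := by
    apply intermediate_value_Icc zero_le_one hcont
    constructor
    · simp [ha, (half_pos hδ).le]
    · simp [hb, (half_pos hδ).le]
  have hzt : z a + t * (z b - z a) = 0 := by
    simpa using (hkerB _ (hseg t ht)).1 htr
  have hab : z a * z b < 0 := by
    -- equal signs are impossible: `z a` and `z b` have a vanishing convex combination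
    by_contra hcon
    rcases mul_nonneg_iff.1 (not_lt.1 hcon) with ⟨h1, h2⟩ | ⟨h1, h2⟩
    · have h1 := lt_of_le_of_ne h1 hza.symm
      have h2 := lt_of_le_of_ne h2 hzb.symm
      rcases ht.1.eq_or_lt with h | h
      · rw [← h] at hzt; linarith
      · nlinarith [mul_pos h h2, mul_nonneg (sub_nonneg.2 ht.2) h1.le]
    · have h1 := lt_of_le_of_ne h1 hza
      have h2 := lt_of_le_of_ne h2 hzb
      rcases ht.1.eq_or_lt with h | h
      · rw [← h] at hzt; linarith
      · nlinarith [mul_neg_of_pos_of_neg h h2, mul_nonneg (sub_nonneg.2 ht.2) (neg_pos.2 h1).le]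
  obtain ⟨x₀, hx₀B, hzx₀, hx₀⟩ :
      ∃ x ∈ B, z x = 0 ∧ ∀ y ∈ F, ∃ t : ℝ, 0 < t ∧ x + t • y ∈ B := by
    by_cases h0 : z xstar = 0
    · exact exists_interior_zero hBconv hint haB (Or.inl h0)
    by_cases h1 : z xstar * z a < 0
    · exact exists_interior_zero hBconv hint haB (Or.inr h1)
    · refine exists_interior_zero hBconv hint hbB (Or.inr ?_)
      have h2 : 0 < z xstar * z a := lt_of_le_of_ne (not_lt.1 h1) (mul_ne_zero h0 hza).symm
      rcases mul_pos_iff.1 h2 with ⟨h3, h4⟩ | ⟨h3, h4⟩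
      · exact mul_neg_of_pos_of_neg h3 (neg_of_mul_neg_right hab h4.le)
      · exact mul_neg_of_neg_of_pos h3 (by nlinarith)
  have hmain : LinearMap.ker z' = Submodule.span ℝ {x : H | (x : E) ∈ B ∧ z' x = 0} := by
    apply le_antisymm
    · intro h hh
      rw [LinearMap.mem_ker, hzz] at hh
      obtain ⟨t, ht, htB⟩ := hx₀ _ (hFH x₀ hx₀B h h.2)
      have hx₀S : (⟨x₀, hBH _ hx₀B⟩ : H) ∈
          Submodule.span ℝ {x : H | (x : E) ∈ B ∧ z' x = 0} :=
        Submodule.subset_span ⟨hx₀B, by rw [hzz]; exact hzx₀⟩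
      have huS : (⟨_, hBH _ htB⟩ : H) ∈
          Submodule.span ℝ {x : H | (x : E) ∈ B ∧ z' x = 0} :=
        Submodule.subset_span ⟨htB, by rw [hzz]; simp [hzx₀, hh]⟩
      convert Submodule.add_mem _ (Submodule.smul_mem _ (φ h) hx₀S)
        (Submodule.smul_mem _ t⁻¹ (Submodule.sub_mem _ huS hx₀S)) using 1
      ext
      simp [smul_smul, inv_mul_cancel₀ ht.ne']
    · rw [Submodule.span_le]
      exact fun x hx => hx.2
  refine ⟨?_, hmain, ?_⟩
  · rintro rfl
    exact hza ((hzz ⟨a, hBH a haB⟩).symm.trans rfl)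
  · simp only [hker]
    exact hmain
end

section
/- Let (E, ‖·‖_E) be a normed space, B ⊆ E non-empty and convex, H := span(B), and assume B1, B2*, and G1. Let r ∈ I and let z₁', z₂' : H → ℝ be ‖·‖_H-continuous linear functionals such that {x ∈ B : Γ(x) = r} = B ∩ ker(z₁') and {x ∈ B : Γ(x) = r} ⊆ B ∩ ker(z₂'). Then there exists α ∈ ℝ with z₂' = α·z₁'; and if moreover {x ∈ B : Γ(x) = r} = B ∩ ker(z₂'), then α ≠ 0. -/
/-!
The kernel of `z₁'` meets `B` in a point `p` that is relatively interior to `B`. Indeed, `Γ` takes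
values below and above `r` on `B`; by the intermediate value theorem any segment joining two such
points meets `{Γ = r} ⊆ ker z₁'` strictly between its endpoints, so `z₁'` has opposite nonzero signs
at the endpoints (`mul_neg_of_level_set`). One of the endpoints `x` therefore lies on the other side
of `ker z₁'` from the interior point `xstar`, and the half-open segment `[xstar, x)` contains such a
`p` (`exists_zero_on_halfopen_segment`); since `xstar` is interior and `B` is convex, so is `p`.

If `y ∈ F` and `z₁' y = 0`, then `p + t • y ∈ B ∩ ker z₁' = {Γ = r} ⊆ ker z₂'` for some `t > 0`, and
`z₂' p = 0`, hence `z₂' y = 0`. As `H = F + ℝ • p`, this gives `ker z₁' ≤ ker z₂'`, that is,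
`z₂' = α • z₁'`. If `α = 0`, then `ker z₂' = H`, and `{Γ = r} = B ∩ ker z₂'` would force `Γ` to be
constant on `B`.
-/

/-- A linear functional whose zero set in the convex set `B` is the level set `{Γ = r}` takes
nonzero values of opposite signs at points `a`, `b` with `Γ a < r < Γ b`, when `Γ` is continuous
along the segment from `a` to `b`. -/
lemma mul_neg_of_level_set {E : Type*} [AddCommGroup E] [Module ℝ E] {B : Set E}
    (hB : Convex ℝ B) {Γ : E → ℝ} {r : ℝ} {g : E →ₗ[ℝ] ℝ}
    (hg : ∀ x ∈ B, Γ x = r ↔ g x = 0) {a b : E} (ha : a ∈ B) (hb : b ∈ B)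
    (har : Γ a < r) (hbr : r < Γ b)
    (hcont : ContinuousOn (fun t : ℝ => Γ (a + t • (b - a))) (Set.Icc 0 1)) :
    g a * g b < 0 := by
  obtain ⟨t, ht, hΓ⟩ := intermediate_value_Icc zero_le_one hcont
    (show r ∈ Set.Icc _ _ by constructor <;> simp [har.le, hbr.le])
  have hm : a + t • (b - a) ∈ B := hB.add_smul_sub_mem ha hb ht
  have h0 := (hg _ hm).1 hΓ
  have hga : g a ≠ 0 := fun h => har.ne ((hg a ha).2 h)
  have hgb : g b ≠ 0 := fun h => hbr.ne' ((hg b hb).2 h)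
  simp only [map_add, map_smul, map_sub, smul_eq_mul] at h0
  have ht0 : 0 < t := ht.1.lt_of_ne (by rintro rfl; simp at h0; exact hga h0)
  have hsq : 0 < g a ^ 2 := by positivity
  have : t * (g a * g b) = -((1 - t) * g a ^ 2) := by linear_combination g a * h0
  by_contra! hcon
  have h1 : (1 - t) * g a ^ 2 ≤ 0 := by nlinarith [mul_nonneg ht0.le hcon]
  have ht1 : t = 1 := by
    by_contra hne
    have : 0 < 1 - t := sub_pos.2 (ht.2.lt_of_ne hne)
    nlinarith [mul_pos this hsq]
  subst ht1
  apply hgb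
  linarith

/-- If `g` changes sign between `a` and `b`, then it vanishes somewhere on `[x₀, a)` or `[x₀, b)`. -/
lemma exists_zero_on_halfopen_segment {E : Type*} [AddCommGroup E] [Module ℝ E] {B : Set E}
    {g : E →ₗ[ℝ] ℝ} {a b : E} (ha : a ∈ B) (hb : b ∈ B) (hab : g a * g b < 0) (x₀ : E) :
    ∃ x ∈ B, ∃ s : ℝ, 0 ≤ s ∧ s < 1 ∧ g ((1 - s) • x₀ + s • x) = 0 := by
  -- `s` solves `(1 - s) * g x₀ + s * g x = 0`
  have key : ∀ x ∈ B, (0 ≤ g x₀ ∧ g x < 0) ∨ (g x₀ ≤ 0 ∧ 0 < g x) →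
      ∃ x ∈ B, ∃ s : ℝ, 0 ≤ s ∧ s < 1 ∧ g ((1 - s) • x₀ + s • x) = 0 := by
    intro x hx h
    have hd : g x₀ - g x ≠ 0 := by
      rcases h with h | h
      · exact ne_of_gt (by linarith)
      · exact ne_of_lt (by linarith)
    refine ⟨x, hx, g x₀ / (g x₀ - g x), ?_, ?_, ?_⟩
    · rcases h with h | h
      · exact div_nonneg h.1 (by linarith)
      · exact div_nonneg_of_nonpos h.1 (by linarith)
    · rcases h with h | h
      · rw [div_lt_one (by linarith)]; linarith
      · rw [div_lt_one_of_neg (by linarith)]; linarith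
    · simp only [map_add, map_smul, smul_eq_mul]
      field_simp
      ring
  rcases mul_neg_iff.1 hab with h | h <;> rcases le_total 0 (g x₀) with h0 | h0
  · exact key b hb (.inl ⟨h0, h.2⟩)
  · exact key a ha (.inr ⟨h0, h.1⟩)
  · exact key a ha (.inl ⟨h0, h.1⟩)
  · exact key b hb (.inr ⟨h0, h.2⟩)

/-- Lemma (equal-modulo-orientation): under B1, B2* and G1, if two `‖·‖_H`-continuous
linear functionals `z₁', z₂'` on `H` satisfy `{Γ = r} = B ∩ ker z₁'` and
`{Γ = r} ⊆ B ∩ ker z₂'`, then `z₂' = α·z₁'` for some `α ∈ ℝ`, and `α ≠ 0` if moreover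
`{Γ = r} = B ∩ ker z₂'`. -/
theorem stmt_14 {E : Type*} [NormedAddCommGroup E] [NormedSpace ℝ E]
    (B : Set E) (hBne : B.Nonempty) (hBconv : Convex ℝ B)
    (H : Submodule ℝ E) (hH : H = Submodule.span ℝ B)
    -- B1
    (φ : E →L[ℝ] ℝ) (hφ : ∀ x ∈ B, φ x = 1)
    -- B2
    (xstar : E) (hxstar : xstar ∈ B)
    (A : Set E) (hA : A = (fun b => -xstar + b) '' B)
    (F : Submodule ℝ E) (hF : F = Submodule.span ℝ A)
    (nF : E → ℝ)
    (hnF_add : ∀ y ∈ F, ∀ z ∈ F, nF (y + z) ≤ nF y + nF z)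
    (hnF_smul : ∀ a : ℝ, ∀ y ∈ F, nF (a • y) = |a| * nF y)
    (hnF_zero : ∀ y ∈ F, (nF y = 0 ↔ y = 0))
    (hnF_dom : ∀ y ∈ F, ‖y‖ ≤ nF y)
    -- B2*: 0 is an interior point of A in (F, ‖·‖_F)
    (hB2star : ∃ ε > 0, ∀ z ∈ F, nF z ≤ ε → z ∈ A)
    (Γ : E → ℝ)
    -- G1: ‖·‖_F-continuity and convex level sets
    (hG1cont : ∀ x ∈ B, ∀ ε > 0, ∃ δ > 0, ∀ y ∈ B, nF (y - x) < δ → |Γ y - Γ x| < ε)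
    (hG1lvl : ∀ r ∈ Γ '' B, Convex ℝ {x ∈ B | Γ x = r})
    (r : ℝ) (hr : r ∈ interior (Γ '' B))
    (z₁' z₂' : H →ₗ[ℝ] ℝ)
    -- ‖·‖_H-continuity of z₁' and z₂'
    (hz₁cont : ∃ C : ℝ, ∀ x : H, ∀ y ∈ F, ∀ α : ℝ, (x : E) = y + α • xstar →
      |z₁' x| ≤ C * (nF y + ‖α • xstar‖))
    (hz₂cont : ∃ C : ℝ, ∀ x : H, ∀ y ∈ F, ∀ α : ℝ, (x : E) = y + α • xstar →
      |z₂' x| ≤ C * (nF y + ‖α • xstar‖))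
    -- {Γ = r} = B ∩ ker z₁'
    (hker₁ : ∀ x : H, ((x : E) ∈ B ∧ Γ (x : E) = r) ↔ ((x : E) ∈ B ∧ z₁' x = 0))
    -- {Γ = r} ⊆ B ∩ ker z₂'
    (hker₂ : ∀ x : H, (x : E) ∈ B → Γ (x : E) = r → z₂' x = 0) :
    ∃ α : ℝ, z₂' = α • z₁' ∧
      ((∀ x : H, ((x : E) ∈ B ∧ Γ (x : E) = r) ↔ ((x : E) ∈ B ∧ z₂' x = 0)) → α ≠ 0) := by
  have hBH : ∀ x ∈ B, x ∈ H := fun x hx => hH ▸ Submodule.subset_span hx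
  have hBF : ∀ x ∈ B, ∀ y ∈ B, y - x ∈ F := by
    have h : ∀ x ∈ B, -xstar + x ∈ F := fun x hx => by
      rw [hF, hA]; exact Submodule.subset_span ⟨x, hx, rfl⟩
    intro x hx y hy
    simpa using F.sub_mem (h y hy) (h x hx)
  -- arbitrary linear extensions to `E`, which avoid the coercions from `H`
  obtain ⟨g₁, hg₁⟩ := LinearMap.exists_extend z₁'
  obtain ⟨g₂, hg₂⟩ := LinearMap.exists_extend z₂'
  have e₁ : ∀ x : H, z₁' x = g₁ x := fun x => by rw [← hg₁]; rfl
  have e₂ : ∀ x : H, z₂' x = g₂ x := fun x => by rw [← hg₂]; rfl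
  have k₁ : ∀ x ∈ B, Γ x = r ↔ g₁ x = 0 := fun x hx => by
    have := hker₁ ⟨x, hBH x hx⟩
    rw [e₁] at this
    simpa [hx] using this
  have k₂ : ∀ x ∈ B, Γ x = r → g₂ x = 0 := fun x hx h => by
    have := hker₂ ⟨x, hBH x hx⟩ hx h
    rwa [e₂] at this
  obtain ⟨ε, hε, hball⟩ := Metric.mem_nhds_iff.1 (mem_interior_iff_mem_nhds.1 hr)
  obtain ⟨a, ha, hΓa⟩ : r - ε / 2 ∈ Γ '' B := hball (by
    rw [Metric.mem_ball, Real.dist_eq, abs_lt]; constructor <;> linarith)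
  obtain ⟨b, hb, hΓb⟩ : r + ε / 2 ∈ Γ '' B := hball (by
    rw [Metric.mem_ball, Real.dist_eq, abs_lt]; constructor <;> linarith)
  have hcont : ContinuousOn (fun t : ℝ => Γ (a + t • (b - a))) (Set.Icc 0 1) := by
    rw [Metric.continuousOn_iff]
    intro t ht η hη
    obtain ⟨δ, hδ, h⟩ := hG1cont _ (hBconv.add_smul_sub_mem ha hb ht) η hη
    have hn : 0 ≤ nF (b - a) := (norm_nonneg _).trans (hnF_dom _ (hBF a ha b hb))
    refine ⟨δ / (nF (b - a) + 1), by positivity, fun u hu hut => ?_⟩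
    refine h _ (hBconv.add_smul_sub_mem ha hb hu) ?_
    have hdiff : a + u • (b - a) - (a + t • (b - a)) = (u - t) • (b - a) := by module
    rw [hdiff, hnF_smul _ _ (hBF a ha b hb)]
    rw [Real.dist_eq, lt_div_iff₀ (by positivity)] at hut
    nlinarith [abs_nonneg (u - t)]
  have hsign : g₁ a * g₁ b < 0 :=
    mul_neg_of_level_set hBconv k₁ ha hb (by linarith) (by linarith) hcont
  obtain ⟨x, hx, s, hs0, hs1, hp0⟩ := exists_zero_on_halfopen_segment ha hb hsign xstar
  set p := (1 - s) • xstar + s • x with hp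
  have hpB : p ∈ B := hBconv hxstar hx (by linarith) hs0 (by ring)
  have hgp : g₂ p = 0 := k₂ p hpB ((k₁ p hpB).2 hp0)
  have hFker : ∀ y ∈ F, g₁ y = 0 → g₂ y = 0 := by
    intro y hy hy0
    obtain ⟨ρ, hρ, hρA⟩ := hB2star
    have hn : 0 ≤ nF y := (norm_nonneg _).trans (hnF_dom _ hy)
    have ht : 0 < ρ / (nF y + 1) := by positivity
    set t := ρ / (nF y + 1) with htdef
    have hxt : xstar + t • y ∈ B := by
      have : t • y ∈ A := hρA _ (F.smul_mem _ hy) (by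
        rw [hnF_smul _ _ hy, abs_of_pos ht, htdef, div_mul_eq_mul_div, div_le_iff₀ (by positivity)]
        nlinarith)
      rw [hA] at this
      obtain ⟨c, hc, hcy⟩ := this
      simpa [← hcy] using hc
    have hpt : p + ((1 - s) * t) • y ∈ B := by
      have := hBconv hxt hx (sub_nonneg.2 hs1.le) hs0 (by ring)
      convert this using 1
      rw [hp]; module
    have h2 := k₂ _ hpt ((k₁ _ hpt).2 (by simp [hp0, hy0]))
    have hne : (1 - s) * t ≠ 0 := (mul_pos (by linarith) ht).ne'
    simpa [hgp, hne, (sub_pos.2 hs1).ne', ht.ne'] using h2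
  have hdecomp : ∀ h ∈ H, h - φ h • p ∈ F := by
    intro h hh
    rw [hH] at hh
    induction hh using Submodule.span_induction with
    | mem c hc => simpa [hφ c hc] using hBF p hpB c hc
    | zero => simp
    | add u v _ _ hu hv =>
      convert F.add_mem hu hv using 1
      rw [map_add]; module
    | smul c u _ hu =>
      convert F.smul_mem c hu using 1
      rw [map_smul, smul_eq_mul]; module
  have hle : LinearMap.ker z₁' ≤ LinearMap.ker z₂' := by
    intro h hh
    rw [LinearMap.mem_ker, e₁] at hh
    rw [LinearMap.mem_ker, e₂]
    simpa [hgp] using hFker _ (hdecomp h h.2) (by simp [hh, hp0])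
  -- the factor `α` is read off at `a`, where the first functional does not vanish
  have hga : g₁ a ≠ 0 := fun h => by simp [h] at hsign
  have hprop : z₂' = (g₂ a / g₁ a) • z₁' := by
    ext h
    have hk : h - (z₁' h / g₁ a) • (⟨a, hBH a ha⟩ : H) ∈ LinearMap.ker z₁' := by
      rw [LinearMap.mem_ker, map_sub, map_smul, e₁ ⟨a, _⟩, smul_eq_mul]
      field_simp
      ring
    have := hle hk
    rw [LinearMap.mem_ker, map_sub, map_smul, e₂ ⟨a, _⟩, smul_eq_mul] at this
    rw [LinearMap.smul_apply, smul_eq_mul]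
    linear_combination this
  refine ⟨_, hprop, fun heq hα => ?_⟩
  rw [hα, zero_smul] at hprop
  have := ((heq ⟨a, hBH a ha⟩).2 ⟨ha, by simp [hprop]⟩).2
  simp only at this
  linarith
end

section
/- Let (E, ‖·‖_E) be a normed space, B ⊆ E non-empty and convex, H := span(B), and assume B1, B2*, B3, B4, G1*, G2, and G3, with Γ̂ : cl(B) → ℝ the continuous extension of Γ from G3. Let (ẑ'_r)_{r∈I} ⊆ E' be the unique family of norm-one extensions of the separating functionals for Γ (i.e. for each r ∈ I, ẑ'_r is the unique element of E' with ‖ẑ'_r‖_{E'} = 1 whose restriction to H is the unique norm-one ‖·‖_E-continuous separating functional z'_r for Γ at level r). Then for every r ∈ I: {x ∈ cl(B) : Γ̂(x) < r} = {x ∈ cl(B) : ẑ'_r(x) < 0}, {x ∈ cl(B) : Γ̂(x) = r} = {x ∈ cl(B) : ẑ'_r(x) = 0}, and {x ∈ cl(B) : Γ̂(x) > r} = {x ∈ cl(B) : ẑ'_r(x) > 0}. -/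
/-!
By continuity and density, `Γhat x < r` on `closure B` forces `zhat x ≤ 0`. The inequality is strict:
the condition `Γhat < r` is open in `closure B`, so it persists for a short way along the segment
from `x` to a point `b ∈ B` with `zhat b > 0` (which exists by local non-constancy of `Γ` at level `r`);
if `zhat x = 0`, then `zhat` would be positive along that segment. This is
`neg_of_lt_of_mem_closure`, and applying it to `-Γhat`, `-r`, `-zhat` gives the case `r < Γhat x`.
If `Γhat x = r`, local non-constancy of `Γhat` puts points with `zhat < 0` and points with
`zhat > 0` arbitrarily close to `x`, so `zhat x = 0`. The three implications cover all cases, so by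
trichotomy each is an equivalence.
-/

open Filter Topology in
/-- A strict one-sided separation on a convex set `B` passes to `closure B`, provided the functional
takes a positive value somewhere on `B`. -/
theorem neg_of_lt_of_mem_closure {E : Type*} [NormedAddCommGroup E] [NormedSpace ℝ E]
    {B : Set E} (hB : Convex ℝ B) {f : E → ℝ} (hf : ContinuousOn f (closure B)) {r : ℝ}
    (z : E →L[ℝ] ℝ) (hz : ∀ x ∈ B, f x < r → z x < 0) {b : E} (hb : b ∈ B) (hzb : 0 < z b)
    {x : E} (hx : x ∈ closure B) (hfx : f x < r) : z x < 0 := by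
  have weak : ∀ y ∈ closure B, f y < r → z y ≤ 0 := by
    intro y hy hfy
    have h1 : ∀ᶠ w in 𝓝[B] y, f w < r :=
      ((hf y hy).mono subset_closure).eventually (gt_mem_nhds hfy)
    have h2 : ∀ᶠ w in 𝓝[B] y, z w ≤ 0 := by
      filter_upwards [h1, self_mem_nhdsWithin] with w hw hwB using (hz w hwB hw).le
    have : (𝓝[B] y).NeBot := mem_closure_iff_nhdsWithin_neBot.mp hy
    exact le_of_tendsto (z.continuous.continuousAt.mono_left nhdsWithin_le_nhds) h2
  refine lt_of_le_of_ne (weak x hx hfx) fun hzx => ?_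
  have hmem : ∀ t ∈ Set.Ioo (0 : ℝ) 1, x + t • (b - x) ∈ closure B := fun t ht =>
    hB.closure.add_smul_sub_mem hx (subset_closure hb) ⟨ht.1.le, ht.2.le⟩
  have hIoo : ∀ᶠ t in 𝓝[>] (0 : ℝ), t ∈ Set.Ioo (0 : ℝ) 1 := Ioo_mem_nhdsGT one_pos
  have hpath : Tendsto (fun t : ℝ => x + t • (b - x)) (𝓝[>] 0) (𝓝[closure B] x) := by
    refine tendsto_nhdsWithin_iff.mpr ⟨?_, hIoo.mono hmem⟩
    have hc : Continuous fun t : ℝ => x + t • (b - x) := by fun_prop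
    simpa using (hc.tendsto 0).mono_left nhdsWithin_le_nhds
  obtain ⟨t, htf, ht⟩ :=
    ((hpath.eventually ((hf x hx).eventually (gt_mem_nhds hfx))).and hIoo).exists
  have h := weak _ (hmem t ht) htf
  have : 0 < t * z b := mul_pos ht.1 hzb
  simp [hzx] at h
  linarith

/-- Theorem (unique extended separation): under B1, B2*, B3, B4, G1*, G2 and G3, the
unique norm-one separating functional `ẑ'_r ∈ E'` for `Γ` at level `r ∈ I` also
separates the level sets of the continuous extension `Γ̂` on the closure of `B`. -/
theorem stmt_17 {E : Type*} [NormedAddCommGroup E] [NormedSpace ℝ E]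
    (B : Set E) (hBne : B.Nonempty) (hBconv : Convex ℝ B)
    (H : Submodule ℝ E) (hH : H = Submodule.span ℝ B)
    -- B1
    (φ : E →L[ℝ] ℝ) (hφ : ∀ x ∈ B, φ x = 1)
    -- B2
    (xstar : E) (hxstar : xstar ∈ B)
    (A : Set E) (hA : A = (fun b => -xstar + b) '' B)
    (F : Submodule ℝ E) (hF : F = Submodule.span ℝ A)
    (nF : E → ℝ)
    (hnF_add : ∀ y ∈ F, ∀ z ∈ F, nF (y + z) ≤ nF y + nF z)
    (hnF_smul : ∀ a : ℝ, ∀ y ∈ F, nF (a • y) = |a| * nF y)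
    (hnF_zero : ∀ y ∈ F, (nF y = 0 ↔ y = 0))
    (hnF_dom : ∀ y ∈ F, ‖y‖ ≤ nF y)
    -- B2*: 0 is an interior point of A in (F, ‖·‖_F)
    (hB2star : ∃ ε > 0, ∀ z ∈ F, nF z ≤ ε → z ∈ A)
    -- B3
    (hB3 : ∃ K : ℝ, 0 < K ∧ ∀ z ∈ H,
      ∃ zp ∈ {w : E | ∃ a : ℝ, 0 ≤ a ∧ ∃ x ∈ B, w = a • x},
      ∃ zm ∈ {w : E | ∃ a : ℝ, 0 ≤ a ∧ ∃ x ∈ B, w = a • x},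
      z = zp - zm ∧ ‖zm‖ + ‖zp‖ ≤ K * ‖z‖)
    -- B4
    (hB4 : Dense (H : Set E))
    (Γ : E → ℝ)
    (I : Set ℝ) (hI : I = interior (Γ '' B))
    -- G1*
    (hG1cont : ContinuousOn Γ B)
    (hG1lvl : ∀ r ∈ Γ '' B, Convex ℝ {x ∈ B | Γ x = r})
    -- G2
    (hG2 : ∀ r ∈ I, ∀ ε > 0, ∀ x ∈ B, Γ x = r →
      ∃ xm ∈ B, ∃ xp ∈ B, Γ xm < r ∧ r < Γ xp ∧ nF (x - xm) ≤ ε ∧ nF (x - xp) ≤ ε)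
    -- G3: a continuous, locally non-constant extension to the closure of B
    (Γhat : E → ℝ)
    (hext : ∀ x ∈ B, Γhat x = Γ x)
    (hcont : ContinuousOn Γhat (closure B))
    (hG3 : ∀ r ∈ I, ∀ ε > 0, ∀ x ∈ closure B, Γhat x = r →
      ∃ xm ∈ closure B, ∃ xp ∈ closure B, Γhat xm < r ∧ r < Γhat xp ∧
        ‖x - xm‖ ≤ ε ∧ ‖x - xp‖ ≤ ε)
    -- the norm-one separating functional at level r ∈ I from Theorem 2.8
    (r : ℝ) (hr : r ∈ I)
    (zhat : E →L[ℝ] ℝ) (hzhatnorm : ‖zhat‖ = 1)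
    (hzhatsep : ∀ x ∈ B,
      (Γ x < r ↔ zhat x < 0) ∧ (Γ x = r ↔ zhat x = 0) ∧ (r < Γ x ↔ 0 < zhat x)) :
    ∀ x ∈ closure B,
      (Γhat x < r ↔ zhat x < 0) ∧ (Γhat x = r ↔ zhat x = 0) ∧
        (r < Γhat x ↔ 0 < zhat x) := by
  subst hI
  have hrB := interior_subset hr
  obtain ⟨x₀, hx₀, hx₀r⟩ := hrB
  obtain ⟨bm, hbm, bp, hbp, hbmr, hbpr, -, -⟩ := hG2 r hr 1 one_pos x₀ hx₀ hx₀r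
  have hlt : ∀ x ∈ closure B, Γhat x < r → zhat x < 0 := fun x hx h =>
    neg_of_lt_of_mem_closure hBconv hcont zhat
      (fun y hy hyr => (hzhatsep y hy).1.mp (hext y hy ▸ hyr))
      hbp ((hzhatsep bp hbp).2.2.mp hbpr) hx h
  have hgt : ∀ x ∈ closure B, r < Γhat x → 0 < zhat x := by
    intro x hx h
    have hneg : (-zhat) x < 0 := by
      refine neg_of_lt_of_mem_closure (f := fun y => -Γhat y) (r := -r) hBconv hcont.neg (-zhat)
        (fun y hy hyr => ?_) hbm ?_ hx (neg_lt_neg h)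
      · have := (hzhatsep y hy).2.2.mp (hext y hy ▸ neg_lt_neg_iff.mp hyr)
        simpa using this
      · simpa using (hzhatsep bm hbm).1.mp hbmr
    simpa using hneg
  have heq : ∀ x ∈ closure B, Γhat x = r → zhat x = 0 := by
    intro x hx h
    have hbd : ∀ y, |zhat x - zhat y| ≤ ‖x - y‖ := fun y => by
      simpa [hzhatnorm] using zhat.le_opNorm (x - y)
    refine le_antisymm ?_ ?_
    · refine le_of_forall_pos_le_add fun ε hε => ?_
      obtain ⟨xm, hxm, -, -, hm, -, hd, -⟩ := hG3 r hr ε hε x hx h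
      linarith [hlt xm hxm hm, (abs_le.mp (hbd xm)).2]
    · refine le_of_forall_pos_le_add fun ε hε => ?_
      obtain ⟨-, -, xp, hxp, -, hp, -, hd⟩ := hG3 r hr ε hε x hx h
      linarith [hgt xp hxp hp, (abs_le.mp (hbd xp)).1]
  intro x hx
  have h1 := hlt x hx
  have h2 := heq x hx
  have h3 := hgt x hx
  rcases lt_trichotomy (Γhat x) r with h | h | h
  · have := h1 h
    refine ⟨?_, ?_, ?_⟩ <;> constructor <;> intro <;> linarith
  · have := h2 h
    refine ⟨?_, ?_, ?_⟩ <;> constructor <;> intro <;> linarith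
  · have := h3 h
    refine ⟨?_, ?_, ?_⟩ <;> constructor <;> intro <;> linarith
end

section
/- Let (E, ‖·‖_E) be a normed space, B ⊆ E non-empty and convex, H := span(B), and assume B1, B2*, B3, B4, B5, G1*, G2, and G4. Let Z : I → E' be defined by Z(r) := ẑ'_r, where ẑ'_r ∈ E' is the unique norm-one extension of the unique norm-one ‖·‖_E-continuous separating functional for Γ at level r. Then Z is measurable with respect to the Lebesgue completion of the Borel σ-algebra on the interval I and the Borel σ-algebra of (E', ‖·‖_{E'}), and Z is an E'-valued strongly (Bochner) measurable function with respect to the completed σ-algebra on I. -/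
/-!
Only the sign of `Z r` on `B` is prescribed, namely `Z r p < 0 ↔ Γ p < r` and
`0 < Z r p ↔ r < Γ p`, so for fixed `p ∈ B` the sets `{r | Z r p < 0}` and `{r | 0 < Z r p}` are
intervals. By convexity of `B` this makes ratios measurable: if `Z r x ≤ 0 < Z r w` and `c ≤ 0`,
then `Z r x / Z r w < c` says that `Z r` is negative at the point `(1 - c)⁻¹ • (x - c • w)` of `B`
(`measurable_ratio`). On a set of levels strictly between `Γ w₀` and `Γ w₁` every ratio
`Z r x / Z r w₁` with `x ∈ B` is then measurable, either directly or through the intermediate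
point `w₀`.

Hence `Y r := (Z r w₁)⁻¹ • Z r` is measurable at each point of `B`, and by linearity and density of
the span of `B` at each point of `E`. As the dual is separable, `E` has a countable norming set of
vectors, so preimages under `Y` of closed balls are measurable and `Y` is Borel measurable
(`measurable_of_apply`). Finally `Z r = ‖Y r‖⁻¹ • Y r`. Countably many such sets of levels, with
rational endpoints, cover the open set `I`.
-/

open MeasureTheory

/-- If the dual is separable, then `E` contains a countable norming set: the norm of a functional is
the supremum of its absolute values on that set. -/
lemma exists_norming_seq {E : Type*} [NormedAddCommGroup E] [NormedSpace ℝ E]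
    [TopologicalSpace.SeparableSpace (E →L[ℝ] ℝ)] :
    ∃ x : ℕ × ℕ → E, ∀ (z : E →L[ℝ] ℝ) (a : ℝ), ‖z‖ ≤ a ↔ 0 ≤ a ∧ ∀ i, |z (x i)| ≤ a := by
  have key : ∀ i : ℕ × ℕ, ∃ x : E, ‖x‖ ≤ 1 ∧
      ‖TopologicalSpace.denseSeq (E →L[ℝ] ℝ) i.1‖ - 1 / ((i.2 : ℝ) + 1) ≤
        |TopologicalSpace.denseSeq (E →L[ℝ] ℝ) i.1 x| := by
    intro i
    obtain ⟨x, hx, hx'⟩ := ContinuousLinearMap.exists_lt_apply_of_lt_opNorm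
      (TopologicalSpace.denseSeq (E →L[ℝ] ℝ) i.1)
      (r := ‖TopologicalSpace.denseSeq (E →L[ℝ] ℝ) i.1‖ - 1 / ((i.2 : ℝ) + 1))
      (by have : 0 < 1 / ((i.2 : ℝ) + 1) := by positivity
          linarith)
    exact ⟨x, hx.le, hx'.le⟩
  choose x hx1 hx2 using key
  refine ⟨x, fun z a => ⟨fun h => ⟨(norm_nonneg z).trans h, fun i => ?_⟩, fun ⟨_, h⟩ => ?_⟩⟩
  · calc |z (x i)| ≤ ‖z‖ * ‖x i‖ := z.le_opNorm (x i)
      _ ≤ ‖z‖ * 1 := by gcongr; exact hx1 i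
      _ ≤ a := by simpa using h
  · refine le_of_forall_pos_le_add fun ε hε => ?_
    obtain ⟨n, hn⟩ := (TopologicalSpace.denseRange_denseSeq (E →L[ℝ] ℝ)).exists_dist_lt z
      (ε := ε / 3) (by positivity)
    obtain ⟨k, hk⟩ := exists_nat_one_div_lt (show (0 : ℝ) < ε / 3 by positivity)
    have h1 := hx2 (n, k)
    have h2 := h (n, k)
    set d := TopologicalSpace.denseSeq (E →L[ℝ] ℝ) n
    rw [dist_eq_norm] at hn
    have h3 : |(z - d) (x (n, k))| ≤ ‖z - d‖ :=
      (z - d).unit_le_opNorm _ (hx1 (n, k))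
    have h4 : ‖z‖ ≤ ‖z - d‖ + ‖d‖ := by simpa using norm_add_le (z - d) d
    have h5 : |d (x (n, k))| ≤ |z (x (n, k))| + |(z - d) (x (n, k))| := by
      have := abs_sub (z (x (n, k))) ((z - d) (x (n, k)))
      simpa using this
    simp only at h1
    linarith

/-- A map into a separable dual that is measurable at each vector is Borel measurable for the
norm topology. -/
lemma measurable_of_apply {T E : Type*} [MeasurableSpace T] [NormedAddCommGroup E]
    [NormedSpace ℝ E] [MeasurableSpace (E →L[ℝ] ℝ)] [BorelSpace (E →L[ℝ] ℝ)]
    [TopologicalSpace.SeparableSpace (E →L[ℝ] ℝ)] (Y : T → (E →L[ℝ] ℝ))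
    (hY : ∀ x, Measurable fun t => Y t x) : Measurable Y := by
  obtain ⟨x, hx⟩ := exists_norming_seq (E := E)
  have hball : ∀ (z : E →L[ℝ] ℝ) (a : ℝ), MeasurableSet (Y ⁻¹' Metric.closedBall z a) := by
    intro z a
    have : Y ⁻¹' Metric.closedBall z a = {_t | 0 ≤ a} ∩ ⋂ i, {t | |Y t (x i) - z (x i)| ≤ a} := by
      ext t
      simp [dist_eq_norm, hx]
    rw [this]
    refine (MeasurableSet.const _).inter (MeasurableSet.iInter fun i => ?_)
    exact measurableSet_le ((hY _).sub_const _).abs measurable_const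
  refine measurable_of_isOpen fun U hU => ?_
  have hU' : U = ⋃ i : {i : ℕ × ℚ // Metric.closedBall
      (TopologicalSpace.denseSeq (E →L[ℝ] ℝ) i.1) (i.2 : ℝ) ⊆ U},
      Metric.closedBall (TopologicalSpace.denseSeq (E →L[ℝ] ℝ) i.1.1) (i.1.2 : ℝ) := by
    refine Set.Subset.antisymm (fun z hz => ?_) (Set.iUnion_subset fun i => i.2)
    obtain ⟨ε, hε, hεU⟩ := Metric.isOpen_iff.1 hU z hz
    obtain ⟨q, hq0, hq⟩ := exists_rat_btwn (show (0 : ℝ) < ε / 2 by positivity)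
    obtain ⟨n, hn⟩ := (TopologicalSpace.denseRange_denseSeq (E →L[ℝ] ℝ)).exists_dist_lt z hq0
    refine Set.mem_iUnion.2 ⟨⟨(n, q), fun y hy => hεU ?_⟩, hn.le⟩
    rw [Metric.mem_closedBall] at hy
    rw [Metric.mem_ball]
    have := dist_triangle_right y z (TopologicalSpace.denseSeq (E →L[ℝ] ℝ) n)
    simp only at hy
    linarith
  rw [hU', Set.preimage_iUnion]
  exact MeasurableSet.iUnion fun i => hball _ _

/-- If the sign of `Z t` at each point of a convex set depends measurably on `t`, then so does the
ratio of a nonpositive value to a positive one. -/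
lemma measurable_ratio {T E : Type*} [MeasurableSpace T] [NormedAddCommGroup E]
    [NormedSpace ℝ E] {B : Set E} (hB : Convex ℝ B) (Z : T → (E →L[ℝ] ℝ))
    (hneg : ∀ p ∈ B, MeasurableSet {t | Z t p < 0})
    (hpos : ∀ p ∈ B, MeasurableSet {t | 0 < Z t p})
    {x w : E} (hx : x ∈ B) (hw : w ∈ B) (hZw : ∀ t, 0 < Z t w) :
    Measurable fun t => if 0 < Z t x then 0 else Z t x / Z t w := by
  refine measurable_of_Iio fun c => ?_
  rcases lt_or_ge 0 c with hc | hc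
  · convert MeasurableSet.univ
    refine Set.eq_univ_of_forall fun t => ?_
    simp only [Set.mem_preimage, Set.mem_Iio]
    split_ifs with h
    · exact hc
    · exact (div_nonpos_of_nonpos_of_nonneg (not_lt.1 h) (hZw t).le).trans_lt hc
  · have hc' : 0 < 1 - c := by linarith
    -- the point of `B` at which the sign of `Z t` decides whether the ratio is below `c`
    have hp : (1 - c)⁻¹ • x + (-c * (1 - c)⁻¹) • w ∈ B :=
      hB hx hw (by positivity) (mul_nonneg (by linarith) (by positivity)) (by field_simp; ring)
    convert (hpos x hx).compl.inter (hneg _ hp) using 1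
    ext t
    have hval : Z t ((1 - c)⁻¹ • x + (-c * (1 - c)⁻¹) • w) = (1 - c)⁻¹ * (Z t x - c * Z t w) := by
      simp only [map_add, map_smul, smul_eq_mul]; ring
    simp only [Set.mem_preimage, Set.mem_Iio, Set.mem_inter_iff, Set.mem_compl_iff,
      Set.mem_ofPred_eq, hval]
    split_ifs with h
    · simp [h, hc]
    · rw [div_lt_iff₀ (hZw t), mul_neg_iff]
      have : 0 < (1 - c)⁻¹ := by positivity
      constructor
      · intro h1; exact ⟨h, Or.inl ⟨this, by linarith⟩⟩
      · rintro ⟨-, h1 | h1⟩ <;> linarith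

/-- A family of norm-one functionals whose signs on a convex set with dense span depend measurably
on the parameter is Borel measurable, provided two points of that set have constant opposite
signs. -/
lemma measurable_of_sign {T E : Type*} [MeasurableSpace T] [NormedAddCommGroup E]
    [NormedSpace ℝ E] [MeasurableSpace (E →L[ℝ] ℝ)] [BorelSpace (E →L[ℝ] ℝ)]
    [TopologicalSpace.SeparableSpace (E →L[ℝ] ℝ)] {B : Set E} (hB : Convex ℝ B)
    (hdense : Dense (Submodule.span ℝ B : Set E)) (Z : T → (E →L[ℝ] ℝ))
    (hnorm : ∀ t, ‖Z t‖ = 1)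
    (hneg : ∀ p ∈ B, MeasurableSet {t | Z t p < 0})
    (hpos : ∀ p ∈ B, MeasurableSet {t | 0 < Z t p})
    {w₀ w₁ : E} (hw₀ : w₀ ∈ B) (hw₁ : w₁ ∈ B) (h₀ : ∀ t, Z t w₀ < 0) (h₁ : ∀ t, 0 < Z t w₁) :
    Measurable Z := by
  have : SecondCountableTopology (E →L[ℝ] ℝ) :=
    UniformSpace.secondCountable_of_separable _
  have hBm : ∀ x ∈ B, Measurable fun t => Z t x / Z t w₁ := by
    intro x hx
    have g1 := measurable_ratio hB Z hneg hpos hx hw₁ h₁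
    have g0 := measurable_ratio hB Z hneg hpos hw₀ hw₁ h₁
    have g2 := measurable_ratio hB (fun t => -Z t) (by simpa using hpos) (by simpa using hneg)
      hx hw₀ (by simpa using h₀)
    -- the first summand vanishes where `Z t x ≤ 0`, the second where `0 < Z t x`
    convert (g2.mul g0).add g1 using 1
    ext t
    have a0 := (h₀ t).ne
    have a1 := (h₁ t).ne'
    by_cases h : 0 < Z t x
    · simp [h, (h₀ t).not_gt, h.not_gt]
      field_simp
    · rcases (not_lt.1 h).eq_or_lt with h' | h'
      · simp [h']
      · simp [h', h'.not_gt]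
  have hspan : ∀ x ∈ Submodule.span ℝ B, Measurable fun t => Z t x / Z t w₁ := by
    intro x hx
    induction hx using Submodule.span_induction with
    | mem x hx => exact hBm x hx
    | zero => simp
    | add x y _ _ hx hy => simpa [add_div] using hx.fun_add hy
    | smul a x _ hx => simpa [mul_div_assoc] using hx.const_mul a
  have hall : ∀ x, Measurable fun t => Z t x / Z t w₁ := by
    intro x
    obtain ⟨u, hu, hux⟩ := mem_closure_iff_seq_limit.1 (hdense x)
    refine measurable_of_tendsto_metrizable (fun n => hspan (u n) (hu n)) ?_
    rw [tendsto_pi_nhds]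
    intro t
    exact (((Z t).continuous.tendsto x).comp hux).div_const _
  have hY : Measurable fun t => (Z t w₁)⁻¹ • Z t :=
    measurable_of_apply _ fun x => by simpa [div_eq_inv_mul] using hall x
  convert (hY.norm.inv).smul hY using 1
  ext1 t
  have := h₁ t
  simp [norm_smul, hnorm, abs_of_pos this, smul_smul, this.ne']

/-- Theorem (measurable dependence): under B1–B5, G1*, G2 and G4, the map
`Z : I → E'` sending `r` to the unique norm-one functional `ẑ'_r ∈ E'` separating the
level sets of `Γ` at level `r` is measurable from the Lebesgue completion of the
Borel σ-algebra on `I` to the Borel σ-algebra of `E'`, and it is strongly (Bochner)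
measurable with respect to the completed σ-algebra. -/
theorem stmt_18 {E : Type*} [NormedAddCommGroup E] [NormedSpace ℝ E]
    -- B5 (part 1): E is a Banach space
    [CompleteSpace E]
    [MeasurableSpace E] [BorelSpace E]
    [MeasurableSpace (E →L[ℝ] ℝ)] [BorelSpace (E →L[ℝ] ℝ)]
    -- B5 (part 2): the dual E' is separable
    [TopologicalSpace.SeparableSpace (E →L[ℝ] ℝ)]
    (B : Set E) (hBne : B.Nonempty) (hBconv : Convex ℝ B)
    (H : Submodule ℝ E) (hH : H = Submodule.span ℝ B)
    -- B1
    (φ : E →L[ℝ] ℝ) (hφ : ∀ x ∈ B, φ x = 1)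
    -- B2
    (xstar : E) (hxstar : xstar ∈ B)
    (A : Set E) (hA : A = (fun b => -xstar + b) '' B)
    (F : Submodule ℝ E) (hF : F = Submodule.span ℝ A)
    (nF : E → ℝ)
    (hnF_add : ∀ y ∈ F, ∀ z ∈ F, nF (y + z) ≤ nF y + nF z)
    (hnF_smul : ∀ a : ℝ, ∀ y ∈ F, nF (a • y) = |a| * nF y)
    (hnF_zero : ∀ y ∈ F, (nF y = 0 ↔ y = 0))
    (hnF_dom : ∀ y ∈ F, ‖y‖ ≤ nF y)
    -- B2*: 0 is an interior point of A in (F, ‖·‖_F)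
    (hB2star : ∃ ε > 0, ∀ z ∈ F, nF z ≤ ε → z ∈ A)
    -- B3
    (hB3 : ∃ K : ℝ, 0 < K ∧ ∀ z ∈ H,
      ∃ zp ∈ {w : E | ∃ a : ℝ, 0 ≤ a ∧ ∃ x ∈ B, w = a • x},
      ∃ zm ∈ {w : E | ∃ a : ℝ, 0 ≤ a ∧ ∃ x ∈ B, w = a • x},
      z = zp - zm ∧ ‖zm‖ + ‖zp‖ ≤ K * ‖z‖)
    -- B4
    (hB4 : Dense (H : Set E))
    (Γ : E → ℝ)
    (I : Set ℝ) (hI : I = interior (Γ '' B))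
    -- G1*
    (hG1cont : ContinuousOn Γ B)
    (hG1lvl : ∀ r ∈ Γ '' B, Convex ℝ {x ∈ B | Γ x = r})
    -- G2
    (hG2 : ∀ r ∈ I, ∀ ε > 0, ∀ x ∈ B, Γ x = r →
      ∃ xm ∈ B, ∃ xp ∈ B, Γ xm < r ∧ r < Γ xp ∧ nF (x - xm) ≤ ε ∧ nF (x - xp) ≤ ε)
    -- G4: B₀ = Γ⁻¹(I) is Borel measurable
    (hG4 : MeasurableSet {x ∈ B | Γ x ∈ I})
    -- Z sends r ∈ I to the unique norm-one separating functional ẑ'_r ∈ E'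
    (Z : ℝ → (E →L[ℝ] ℝ))
    (hZ : ∀ r ∈ I, ‖Z r‖ = 1 ∧ ∀ x ∈ B,
      (Γ x < r ↔ Z r x < 0) ∧ (Γ x = r ↔ Z r x = 0) ∧ (r < Γ x ↔ 0 < Z r x)) :
    NullMeasurable Z (volume.restrict I) ∧
      AEStronglyMeasurable Z (volume.restrict I) := by
  have : SecondCountableTopology (E →L[ℝ] ℝ) :=
    UniformSpace.secondCountable_of_separable _
  have hIopen : IsOpen I := hI ▸ isOpen_interior
  have hIsub : I ⊆ Γ '' B := hI ▸ interior_subset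
  have hcover : I = ⋃ i : {i : ℚ × ℚ // (i.1 : ℝ) ∈ I ∧ (i.2 : ℝ) ∈ I},
      Set.Ioo (i.1.1 : ℝ) (i.1.2 : ℝ) ∩ I := by
    refine Set.Subset.antisymm (fun r hr => ?_) (Set.iUnion_subset fun i => Set.inter_subset_right)
    obtain ⟨ε, hε, hball⟩ := Metric.isOpen_iff.1 hIopen r hr
    obtain ⟨p, hp1, hp2⟩ := exists_rat_btwn (show r - ε < r by linarith)
    obtain ⟨q, hq1, hq2⟩ := exists_rat_btwn (show r < r + ε by linarith)
    have hp : (p : ℝ) ∈ I := hball (by rw [Real.ball_eq_Ioo]; exact ⟨hp1, by linarith⟩)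
    have hq : (q : ℝ) ∈ I := hball (by rw [Real.ball_eq_Ioo]; exact ⟨by linarith, hq2⟩)
    exact Set.mem_iUnion.2 ⟨⟨(p, q), hp, hq⟩, ⟨hp2, hq1⟩, hr⟩
  have hae : AEMeasurable Z (volume.restrict I) := by
    rw [hcover, aemeasurable_iUnion_iff]
    rintro ⟨⟨p, q⟩, hp, hq⟩
    obtain ⟨w₀, hw₀, hpw⟩ := hIsub hp
    obtain ⟨w₁, hw₁, hqw⟩ := hIsub hq
    refine aemeasurable_restrict_of_measurable_subtype
      (measurableSet_Ioo.inter hIopen.measurableSet) ?_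
    refine measurable_of_sign hBconv (hH ▸ hB4) _ (fun t => (hZ t t.2.2).1) ?_ ?_ hw₀ hw₁ ?_ ?_
    · intro x hx
      have : {t : ↥(Set.Ioo (p : ℝ) (q : ℝ) ∩ I) | Z (t : ℝ) x < 0} =
          {t : ↥(Set.Ioo (p : ℝ) (q : ℝ) ∩ I) | Γ x < (t : ℝ)} := by
        ext t
        exact ((hZ t t.2.2).2 x hx).1.symm
      exact this ▸ measurableSet_lt measurable_const measurable_subtype_coe
    · intro x hx
      have : {t : ↥(Set.Ioo (p : ℝ) (q : ℝ) ∩ I) | 0 < Z (t : ℝ) x} =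
          {t : ↥(Set.Ioo (p : ℝ) (q : ℝ) ∩ I) | (t : ℝ) < Γ x} := by
        ext t
        exact ((hZ t t.2.2).2 x hx).2.2.symm
      exact this ▸ measurableSet_lt measurable_subtype_coe measurable_const
    · intro t
      exact ((hZ t t.2.2).2 w₀ hw₀).1.1 (hpw.trans_lt t.2.1.1)
    · intro t
      exact ((hZ t t.2.2).2 w₁ hw₁).2.2.1 (t.2.1.2.trans_eq hqw.symm)
  exact ⟨hae.nullMeasurable, hae.aestronglyMeasurable⟩
end

section
/- Let (E, ‖·‖_E) be a finite-dimensional normed space, B ⊆ E non-empty and convex, H := span(B), and assume B1, B2*, B3, B4, G1*, and G2. Then the map Z : I → E' defined by Z(r) := ẑ'_r, where ẑ'_r ∈ E' is the unique norm-one extension of the unique norm-one ‖·‖_E-continuous separating functional for Γ at level r, is continuous with respect to the dual norm on E'. -/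
/-!
The unit sphere of the finite-dimensional dual `E'` is compact, so it suffices that every cluster
point `z` of `Z` along `𝓝[I] r` equals `w := Z r`. Passing to the limit in the sign conditions gives
`z ≤ 0` on `{Γ < r}` and `z ≥ 0` on `{Γ > r}`, and G2 then forces `z = 0` on `{Γ = r} = {w = 0} ∩ B`.
The hyperplane `{w = 0}` contains a point `p` of the relative interior of `B`: the segment from the
relatively interior point `xstar` to a point of `B` on the other side of `{w = 0}` crosses it before
its far end. Around `p`, the set `B ∩ {w = 0}` contains a piece of every line in the directions of
`F ∩ ker w`, so `B ∩ {w = 0}` spans `ker w` and `ker w ⊆ ker z`. Hence `z = c • w`; the norms give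
`|c| = 1`, and the sign at one point of `{Γ < r}` gives `c = 1`.
-/

open Filter Topology

/-- If `w` takes a negative and a positive value on `B`, then a segment from a given `p ∈ B` to some
point of `B` meets `{w = 0}` strictly before its far end. -/
lemma exists_zero_on_segment {E : Type*} [NormedAddCommGroup E] [NormedSpace ℝ E]
    {B : Set E} {w : E →L[ℝ] ℝ} {p a b : E} (hp : p ∈ B) (ha : a ∈ B) (hb : b ∈ B)
    (hwa : w a < 0) (hwb : 0 < w b) :
    ∃ x ∈ B, ∃ t : ℝ, 0 ≤ t ∧ t < 1 ∧ w ((1 - t) • p + t • x) = 0 := by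
  rcases lt_trichotomy (w p) 0 with h | h | h
  · have hd : 0 < w b - w p := by linarith
    refine ⟨b, hb, -w p / (w b - w p), div_nonneg (by linarith) hd.le, ?_, ?_⟩
    · rw [div_lt_one hd]; linarith
    · simp only [map_add, map_smul, smul_eq_mul]
      field_simp
      ring
  · exact ⟨p, hp, 0, le_rfl, one_pos, by simp [h]⟩
  · have hd : 0 < w p - w a := by linarith
    refine ⟨a, ha, w p / (w p - w a), div_nonneg (by linarith) hd.le, ?_, ?_⟩
    · rw [div_lt_one hd]; linarith
    · simp only [map_add, map_smul, smul_eq_mul]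
      field_simp
      ring

/-- A norm-one functional vanishing on the kernel of a norm-one functional `w`, and nonpositive at
some point where `w` is negative, is `w`. -/
lemma eq_of_ker_le_of_norm_one {E : Type*} [NormedAddCommGroup E] [NormedSpace ℝ E]
    {w z : E →L[ℝ] ℝ} (hw : ‖w‖ = 1) (hz : ‖z‖ = 1) (hker : ∀ v, w v = 0 → z v = 0)
    {a : E} (hwa : w a < 0) (hza : z a ≤ 0) : z = w := by
  have hzw : z = (z a / w a) • w := by
    ext v
    have h := hker (v - (w v / w a) • a) (by simp [hwa.ne])
    simp only [map_sub, map_smul, smul_eq_mul, sub_eq_zero] at h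
    simp only [ContinuousLinearMap.smul_apply, smul_eq_mul]
    rw [h]; ring
  have hc : 0 ≤ z a / w a := div_nonneg_of_nonpos hza hwa.le
  have hn := congrArg norm hzw
  rw [norm_smul, hz, hw, mul_one, Real.norm_of_nonneg hc] at hn
  rw [hzw, ← hn, one_smul]

/-- Corollary (continuous dependence in finite dimensions): under B1, B2*, B3, B4,
G1* and G2, for a finite-dimensional `E` the map `Z : I → E'` sending `r` to the
unique norm-one functional `ẑ'_r ∈ E'` separating the level sets of `Γ` at level `r`
is norm continuous on `I`. -/
theorem stmt_19 {E : Type*} [NormedAddCommGroup E] [NormedSpace ℝ E]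
    [FiniteDimensional ℝ E]
    (B : Set E) (hBne : B.Nonempty) (hBconv : Convex ℝ B)
    (H : Submodule ℝ E) (hH : H = Submodule.span ℝ B)
    -- B1
    (φ : E →L[ℝ] ℝ) (hφ : ∀ x ∈ B, φ x = 1)
    -- B2
    (xstar : E) (hxstar : xstar ∈ B)
    (A : Set E) (hA : A = (fun b => -xstar + b) '' B)
    (F : Submodule ℝ E) (hF : F = Submodule.span ℝ A)
    (nF : E → ℝ)
    (hnF_add : ∀ y ∈ F, ∀ z ∈ F, nF (y + z) ≤ nF y + nF z)
    (hnF_smul : ∀ a : ℝ, ∀ y ∈ F, nF (a • y) = |a| * nF y)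
    (hnF_zero : ∀ y ∈ F, (nF y = 0 ↔ y = 0))
    (hnF_dom : ∀ y ∈ F, ‖y‖ ≤ nF y)
    -- B2*: 0 is an interior point of A in (F, ‖·‖_F)
    (hB2star : ∃ ε > 0, ∀ z ∈ F, nF z ≤ ε → z ∈ A)
    -- B3
    (hB3 : ∃ K : ℝ, 0 < K ∧ ∀ z ∈ H,
      ∃ zp ∈ {w : E | ∃ a : ℝ, 0 ≤ a ∧ ∃ x ∈ B, w = a • x},
      ∃ zm ∈ {w : E | ∃ a : ℝ, 0 ≤ a ∧ ∃ x ∈ B, w = a • x},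
      z = zp - zm ∧ ‖zm‖ + ‖zp‖ ≤ K * ‖z‖)
    -- B4
    (hB4 : Dense (H : Set E))
    (Γ : E → ℝ)
    (I : Set ℝ) (hI : I = interior (Γ '' B))
    -- G1*
    (hG1cont : ContinuousOn Γ B)
    (hG1lvl : ∀ r ∈ Γ '' B, Convex ℝ {x ∈ B | Γ x = r})
    -- G2
    (hG2 : ∀ r ∈ I, ∀ ε > 0, ∀ x ∈ B, Γ x = r →
      ∃ xm ∈ B, ∃ xp ∈ B, Γ xm < r ∧ r < Γ xp ∧ nF (x - xm) ≤ ε ∧ nF (x - xp) ≤ ε)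
    -- Z sends r ∈ I to the unique norm-one separating functional ẑ'_r ∈ E'
    (Z : ℝ → (E →L[ℝ] ℝ))
    (hZ : ∀ r ∈ I, ‖Z r‖ = 1 ∧ ∀ x ∈ B,
      (Γ x < r ↔ Z r x < 0) ∧ (Γ x = r ↔ Z r x = 0) ∧ (r < Γ x ↔ 0 < Z r x)) :
    ContinuousOn Z I := by
  -- A dense subspace of a finite-dimensional space is the whole space.
  have hHtop : ∀ v : E, v ∈ Submodule.span ℝ B := by
    intro v
    have hcl : IsClosed (H : Set E) := H.closed_of_finiteDimensional
    have : v ∈ (H : Set E) := by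
      rw [← hcl.closure_eq]; exact hB4 v
    rwa [hH] at this
  have hsubF : ∀ x ∈ B, x - xstar ∈ F := by
    intro x hx
    rw [hF, hA]
    exact Submodule.subset_span ⟨x, hx, by simp only; abel⟩
  have hproj : ∀ v : E, v - φ v • xstar ∈ F := by
    intro v
    induction hHtop v using Submodule.span_induction with
    | mem x hx => simpa [hφ x hx] using hsubF x hx
    | zero => simp
    | add x y _ _ hx hy =>
      have := F.add_mem hx hy
      convert this using 1
      rw [map_add, add_smul]; abel
    | smul a x _ hx =>
      have := F.smul_mem a hx
      convert this using 1
      rw [map_smul, smul_sub, smul_assoc]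
  obtain ⟨ε, hε, hball⟩ := hB2star
  have hballB : ∀ u ∈ F, nF u ≤ ε → xstar + u ∈ B := by
    intro u hu hle
    have := hball u hu hle
    rw [hA] at this
    obtain ⟨b, hb, rfl⟩ := this
    simpa using hb
  intro r hr
  have hcpt : IsCompact (Metric.sphere (0 : E →L[ℝ] ℝ) 1) := isCompact_sphere 0 1
  refine hcpt.tendsto_nhds_of_unique_mapClusterPt ?_ ?_
  · filter_upwards [self_mem_nhdsWithin] with s hs
    simpa using (hZ s hs).1
  intro z hzs hz
  have hz1 : ‖z‖ = 1 := by simpa using hzs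
  have hmem : ∀ S : Set (E →L[ℝ] ℝ), IsClosed S → (∀ᶠ s in 𝓝[I] r, Z s ∈ S) → z ∈ S := by
    intro S hS hev
    exact isClosed_iff_clusterPt.1 hS z (ClusterPt.mono hz (le_principal_iff.2 hev))
  have hneg : ∀ x ∈ B, Γ x < r → z x ≤ 0 := by
    intro x hx hlt
    refine hmem {f | f x ≤ 0} (isClosed_le (by fun_prop) continuous_const) ?_
    filter_upwards [self_mem_nhdsWithin, mem_nhdsWithin_of_mem_nhds (Ioi_mem_nhds hlt)]
      with s hs hs'
    exact (((hZ s hs).2 x hx).1.1 hs').le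
  have hpos : ∀ x ∈ B, r < Γ x → 0 ≤ z x := by
    intro x hx hlt
    refine hmem {f | 0 ≤ f x} (isClosed_le continuous_const (by fun_prop)) ?_
    filter_upwards [self_mem_nhdsWithin, mem_nhdsWithin_of_mem_nhds (Iio_mem_nhds hlt)]
      with s hs hs'
    exact (((hZ s hs).2 x hx).2.2.1 hs').le
  -- G2 approximates a point of `{Γ = r}` from both sides, in `‖·‖` because `‖·‖ ≤ nF` on `F`.
  have hzbound : ∀ x ∈ B, ∀ y ∈ B, ∀ δ : ℝ, nF (x - y) ≤ δ → |z x - z y| ≤ δ := by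
    intro x hx y hy δ hδ
    have hF' : x - y ∈ F := by
      simpa using F.sub_mem (hsubF x hx) (hsubF y hy)
    have h1 := z.le_opNorm (x - y)
    rw [hz1, one_mul, map_sub, Real.norm_eq_abs] at h1
    exact h1.trans ((hnF_dom _ hF').trans hδ)
  have hzero : ∀ x ∈ B, Γ x = r → z x = 0 := by
    intro x hx hxr
    apply le_antisymm
    · refine le_of_forall_pos_le_add fun δ hδ => ?_
      obtain ⟨xm, hxm, -, -, hlt, -, hle, -⟩ := hG2 r hr δ hδ x hx hxr
      have := abs_le.1 (hzbound x hx xm hxm δ hle)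
      linarith [hneg xm hxm hlt]
    · refine le_of_forall_pos_le_add fun δ hδ => ?_
      obtain ⟨-, -, xp, hxp, -, hlt, -, hle⟩ := hG2 r hr δ hδ x hx hxr
      have := abs_le.1 (hzbound x hx xp hxp δ hle)
      linarith [hpos xp hxp hlt]
  obtain ⟨hw1, hw⟩ := hZ r hr
  obtain ⟨x₀, hx₀, hx₀r⟩ : r ∈ Γ '' B := interior_subset (hI ▸ hr)
  obtain ⟨a, ha, b, hb, har, hbr, -, -⟩ := hG2 r hr 1 one_pos x₀ hx₀ hx₀r
  have hwa : Z r a < 0 := (hw a ha).1.1 har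
  have hwb : 0 < Z r b := (hw b hb).2.2.1 hbr
  refine eq_of_ker_le_of_norm_one hw1 hz1 ?_ hwa (hneg a ha har)
  obtain ⟨x, hx, t, ht0, ht1, hp⟩ := exists_zero_on_segment hxstar ha hb hwa hwb
  set p := (1 - t) • xstar + t • x with hpdef
  have hpB : p ∈ B := hBconv hxstar hx (by linarith) ht0 (by ring)
  have hzB : ∀ y ∈ B, Z r y = 0 → z y = 0 := fun y hy hy0 =>
    hzero y hy ((hw y hy).2.1.2 hy0)
  intro v hv
  -- `u` is the component of `v` in `F` along `p`, a direction in which `B` extends around `p`.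
  set u := v - φ v • p with hu
  have huF : u ∈ F := by
    have h := hproj u
    have : φ u = 0 := by simp [hu, hφ p hpB]
    simpa [this] using h
  have hwu : Z r u = 0 := by simp [hu, hv, hp]
  have hnu : 0 ≤ nF u := (norm_nonneg u).trans (hnF_dom u huF)
  set δ := ε / (nF u + 1) with hδ
  have hδ0 : 0 < δ := by positivity
  have hδu : nF (δ • u) ≤ ε := by
    rw [hnF_smul δ u huF, abs_of_pos hδ0, hδ, div_mul_eq_mul_div, div_le_iff₀ (by linarith)]
    nlinarith
  have hq : p + ((1 - t) * δ) • u ∈ B := by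
    have h := hBconv (hballB _ (F.smul_mem δ huF) hδu) hx (by linarith : 0 ≤ 1 - t) ht0 (by ring)
    convert h using 1
    rw [hpdef, smul_add, smul_smul]; abel
  have hzq := hzB _ hq (by simp [hp, hwu])
  have hzp := hzB p hpB hp
  have hzu : z u = 0 := by
    have hne : (1 - t) * δ ≠ 0 := mul_ne_zero (by linarith) hδ0.ne'
    simpa only [map_add, map_smul, hzp, zero_add, smul_eq_mul, mul_eq_zero, hne, false_or]
      using hzq
  simpa [hu, hzp] using hzu
end
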